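/- arXiv:2603.05973 — 5 statements merged into one kernel-verified Lean document; each statement's English description precedes it below -/
import Mathlib

section
/- Let k ≥ 3 be an integer. Then zero is an accumulation point of the set Π_2^k = {π_2(F) : F is a k-graph}; that is, for every ε > 0 there exists a k-graph F with 0 < π_2(F) < ε. -/
/-!
Write `k = r + 3`. The hypergraph `F` is assembled from walks of pairs of vertices. A step from the
pair `{u, v}` to the pair `{w, x}` consists of the two edges `{u, v, z} ∪ Y` with `z ∈ {w, x}`,
for a common set `Y` of `r` vertices. For suitable numbers `t`, `ℓ` and `N`, `F` contains, for every
pair among `N + 1` starting vertices, a walk of pairs that starts at this pair and returns at step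
`t + ℓ` to its pair at step `t` (`walkEdges`).

Upper bound. Suppose all pairs of an `m`-vertex `k`-graph have relative degree at least `c`. Then
each pair has a step to a proportion at least `c ^ 2 / 8` of all pairs. In a digraph with linear
minimum out-degree a greedily chosen set of bounded size is reachable in two steps from everywhere,
so some walk from each vertex becomes periodic, with preperiod and period depending only on `c`
(`periodic_walks`, `pair_walks`). With these `t` and `ℓ`, and `m > N`, there is a homomorphism from
`F` (`walk_hom`). To turn it into a copy of `F`, sample `m`-tuples in a large `k`-graph of minimum
relative pair degree `2 c`: by concentration at least half of them induce a `k`-graph of minimum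
relative pair degree `c` (`sampling`), a positive proportion induces the same one, and hence
a blow-up of it appears (`exists_box`, `upper_bound`). So the density is at most `2 c`.

Lower bound. Colour the vertices by residues modulo `N`, and let the edges be the `k`-sets such that
whenever two vertices have the same residue `g`, the others have residues `g + 1, …, g + r + 1`
(`shiftGraph`). Every pair has positive relative degree (`shift_tup`). Among `N + 1` starting
vertices two have the same residue; a step from a pair with equal residues leads to a pair with
equal residues, larger by one of `1, …, r + 1`. Around the cycle the residue increases by a total
between `ℓ` and `(r + 1) ℓ < N`, a contradiction (`shift_no_walk`). So these `k`-graphs are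
`F`-free and the density is positive.

The existence of the density is part of the claim. It follows from the same sampling lemma, which
shows that the normalized extremal numbers are nonincreasing up to an error tending to zero
(`density_exists`).
-/

open Finset Filter

variable {α : Type*} {β : Type*}

/-- `(V, E)` is a `k`-uniform hypergraph: every edge is a `k`-element subset of `V`. -/
def IsKGraph [DecidableEq α] (k : ℕ) (V : Finset α) (E : Finset (Finset α)) : Prop :=
  ∀ e ∈ E, e ⊆ V ∧ e.card = k

/-- The degree of a vertex set `S`: the number of edges containing `S`. -/
def degS [DecidableEq α] (E : Finset (Finset α)) (S : Finset α) : ℕ :=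
  (E.filter fun e => S ⊆ e).card

/-- The minimum `ℓ`-degree of a hypergraph: the minimum of `degS` over `ℓ`-subsets of `V`. -/
noncomputable def minDeg [DecidableEq α] (ℓ : ℕ) (V : Finset α) (E : Finset (Finset α)) : ℕ :=
  sInf {d | ∃ S ⊆ V, S.card = ℓ ∧ d = degS E S}

/-- The edge set of the link of `S`: `{e \ S : S ⊆ e ∈ E}`. -/
def linkE [DecidableEq α] (E : Finset (Finset α)) (S : Finset α) : Finset (Finset α) :=
  (E.filter fun e => S ⊆ e).image fun e => e \ S

/-- The rank (1-based position) of `x` within `T` with respect to `σ`. -/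
def rankIn (T : Finset α) (σ : α → ℕ) (x : α) : ℕ :=
  (T.filter fun y => σ y ≤ σ x).card

/-- `σ` is an ordering of `V`, i.e. a bijection `V → {1, …, |V|}`. -/
def IsOrdering (V : Finset α) (σ : α → ℕ) : Prop :=
  Set.BijOn σ ↑V (Set.Icc 1 V.card)

/-- `σ` is an `ℓ`-vanishing order of the `k`-graph `(V, E)`: it is an ordering of `V` and there
is a coloring `φ` of `ℓ`-sets of vertices such that for every edge `e` and every `ℓ`-subset `X`
of `e`, `φ X` equals the set of positions that `X` occupies inside `e` under `σ`. -/
def IsVanishingOrder [DecidableEq α] (ℓ : ℕ) (V : Finset α) (E : Finset (Finset α))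
    (σ : α → ℕ) : Prop :=
  IsOrdering V σ ∧
    ∃ φ : Finset α → Finset ℕ,
      ∀ e ∈ E, ∀ X ⊆ e, X.card = ℓ → φ X = X.image (rankIn e σ)

/-- The hypergraph `(VH, EH)` contains a copy of `(VF, EF)`. -/
def ContainsCopy [DecidableEq α] [DecidableEq β] (VF : Finset α) (EF : Finset (Finset α))
    (VH : Finset β) (EH : Finset (Finset β)) : Prop :=
  ∃ f : α → β, Set.InjOn f ↑VF ∧ (∀ v ∈ VF, f v ∈ VH) ∧ ∀ e ∈ EF, e.image f ∈ EH

/-- `ex_ℓ(n, F)`: the maximum of `δ_ℓ(H)` over all `F`-free `k`-graphs `H` on `n` vertices. -/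
noncomputable def exDeg [DecidableEq α] (k ℓ n : ℕ) (VF : Finset α)
    (EF : Finset (Finset α)) : ℕ :=
  sSup {d | ∃ E : Finset (Finset (Fin n)), (∀ e ∈ E, e.card = k) ∧
    ¬ ContainsCopy VF EF (Finset.univ : Finset (Fin n)) E ∧ d = minDeg ℓ Finset.univ E}

/-- The `ℓ`-degree Turán density of the `k`-graph `F = (VF, EF)` equals `x`, i.e.
`ex_ℓ(n, F) / C(n-ℓ, k-ℓ) → x` as `n → ∞` (this limit is known to exist). -/
def HasTuranDensity [DecidableEq α] (k ℓ : ℕ) (VF : Finset α) (EF : Finset (Finset α))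
    (x : ℝ) : Prop :=
  Tendsto (fun n : ℕ => (exDeg k ℓ n VF EF : ℝ) / ((n - ℓ).choose (k - ℓ) : ℝ)) atTop (nhds x)

/-- The `t`-uniform hypergraph `(V, E)` is `t`-partite: the vertices can be split into `t`
parts so that every edge contains exactly one vertex from each part. -/
def IsPartite (t : ℕ) (V : Finset α) (E : Finset (Finset α)) : Prop :=
  ∃ P : α → Fin t, ∀ e ∈ E, ∀ i : Fin t, (e.filter fun v => P v = i).card = 1

/-! ### Concentration for random tuples -/

/-- Summing over all functions on `J` a quantity which depends only on the restriction to a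
subset `I` of `J`. -/
theorem sum_marg {I J V : Type*} [Fintype I] [Fintype J] [Fintype V] [DecidableEq I]
    [DecidableEq J] (e : I ↪ J) (F : (I → V) → ℝ) :
    ∑ y : J → V, F (y ∘ e)
      = (Fintype.card V : ℝ) ^ (Fintype.card J - Fintype.card I) * ∑ z : I → V, F z := by
  classical
  let q : J → Prop := fun j => j ∈ Set.range e
  let φ := Equiv.piEquivPiSubtypeProd q (fun _ => V)
  let ψ : I ≃ {j // q j} := Equiv.ofInjective e e.injective
  have h1 : ∑ y : J → V, F (y ∘ e)
      = ∑ x : ({j // q j} → V) × ({j // ¬ q j} → V), F (x.1 ∘ ψ) := by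
    refine Fintype.sum_equiv φ _ _ fun y => ?_
    congr 1
  have h2 : ∑ x : {j // q j} → V, F (x ∘ ψ) = ∑ z : I → V, F z :=
    Fintype.sum_equiv (Equiv.arrowCongr ψ.symm (Equiv.refl V)) _ _ fun y => by
      congr 1
  have h3 : Fintype.card {j // ¬ q j} = Fintype.card J - Fintype.card I := by
    rw [Fintype.card_subtype_compl, Fintype.card_congr ψ]
  rw [h1, Fintype.sum_prod_type]
  simp only [sum_const, nsmul_eq_mul, card_univ]
  rw [← mul_sum, h2, Fintype.card_fun, h3]
  push_cast
  ring

/-- Independence: the sum over `b` disjoint blocks of a product of block functions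
factors. -/
theorem sum_blocks {V : Type*} [Fintype V] (b r : ℕ) (h : (Fin r → V) → ℝ) :
    ∑ z : Fin b × Fin r → V, ∏ s, h (fun i => z (s, i)) = (∑ w, h w) ^ b := by
  rw [Fintype.sum_pow]
  exact Fintype.sum_equiv (Equiv.curry _ _ _) _ _ fun z => rfl

/-- Averaging over all permutations of `J` turns one fixed `r`-tuple of distinct indices into
a uniformly random one. This is how disjoint blocks replace the dependent `r`-tuples in a
U-statistic. -/
theorem sum_perm {J : Type*} [Fintype J] [DecidableEq J] {r : ℕ} (h : (Fin r ↪ J) → ℝ)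
    (e : Fin r ↪ J) :
    (Fintype.card (Fin r ↪ J) : ℝ) * ∑ σ : Equiv.Perm J, h (e.trans σ.toEmbedding)
      = (Fintype.card (Equiv.Perm J) : ℝ) * ∑ e', h e' := by
  have key : ∀ e' : Fin r ↪ J, ∑ σ : Equiv.Perm J, h (e'.trans σ.toEmbedding)
      = ∑ σ : Equiv.Perm J, h (e.trans σ.toEmbedding) := by
    intro e'
    have := Equiv.Perm.isMultiplyPretransitive J r
    obtain ⟨τ, hτ⟩ := MulAction.exists_smul_eq (Equiv.Perm J) e' e
    symm
    refine Fintype.sum_equiv (Equiv.mulRight τ) _ _ fun σ => ?_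
    congr 1
    ext i
    rw [← hτ]
    rfl
  have h2 : ∑ e' : Fin r ↪ J, ∑ σ : Equiv.Perm J, h (e'.trans σ.toEmbedding)
      = ∑ σ : Equiv.Perm J, ∑ e', h e' := by
    rw [sum_comm]
    refine sum_congr rfl fun σ _ => ?_
    exact Fintype.sum_equiv (Equiv.embeddingCongr (Equiv.refl _) σ) _ _ fun e' => by
      congr 1
  simp only [key, sum_const, nsmul_eq_mul, card_univ] at h2
  exact h2

/-- The exponential moment of a `{0, 1}`-valued function with mean `p`. -/
theorem sum_exp_le {X : Type*} [Fintype X] [Nonempty X] (G : X → ℝ)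
    (hG : ∀ w, G w = 0 ∨ G w = 1) (p t : ℝ) (ht : 0 ≤ t) (ht1 : t ≤ 1)
    (hp : p * Fintype.card X = ∑ w, G w) :
    ∑ w, Real.exp (-(t * G w)) ≤ Fintype.card X * Real.exp (-(p * t) + t ^ 2) := by
  have hX : (0 : ℝ) < Fintype.card X := by exact_mod_cast Fintype.card_pos
  have hG1 : ∀ w, Real.exp (-(t * G w)) = 1 - G w * (1 - Real.exp (-t)) := by
    intro w
    rcases hG w with h | h <;> simp [h]
  have hsum : ∑ w, Real.exp (-(t * G w)) = Fintype.card X * (1 - p * (1 - Real.exp (-t))) := by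
    simp only [hG1, sum_sub_distrib, ← sum_mul, ← hp]
    simp
    ring
  have hp0 : 0 ≤ p := by
    have : 0 ≤ p * Fintype.card X := by
      rw [hp]
      exact sum_nonneg fun w _ => by rcases hG w with h | h <;> simp [h]
    exact nonneg_of_mul_nonneg_left this hX
  have hp1 : p ≤ 1 := by
    have : p * Fintype.card X ≤ 1 * Fintype.card X := by
      rw [hp, one_mul]
      calc ∑ w, G w ≤ ∑ w : X, (1 : ℝ) :=
            sum_le_sum fun w _ => by rcases hG w with h | h <;> simp [h]
        _ = _ := by simp
    exact le_of_mul_le_mul_right this hX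
  rw [hsum]
  refine mul_le_mul_of_nonneg_left ?_ hX.le
  have h1 := (abs_le.mp (Real.abs_exp_sub_one_sub_id_le (x := -t)
    (by rw [abs_neg, abs_of_nonneg ht]; exact ht1))).2
  have h2 := Real.add_one_le_exp (-(p * t) + t ^ 2)
  nlinarith [sq_nonneg t]

open scoped Classical in
/-- Lower-tail concentration for the U-statistic `∑ e, G (y ∘ e)` of a `{0, 1}`-valued `G` with
mean at least `p`. Following Hoeffding, the U-statistic is written as an average over
permutations of sums over `b` disjoint blocks; Jensen's inequality reduces its exponential moment
to that of a sum of `b` independent terms. -/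
theorem conc {J V : Type*} [Fintype J] [Fintype V] [Nonempty V] [DecidableEq J] {r b : ℕ}
    (e0 : Fin b × Fin r ↪ J) (G : (Fin r → V) → ℝ)
    (hG : ∀ w, G w = 0 ∨ G w = 1) (p η : ℝ) (hη : 0 < η) (hη1 : η ≤ 2)
    (hp : p * (Fintype.card V : ℝ) ^ r ≤ ∑ w, G w) :
    ((univ.filter fun y : J → V =>
        ∑ e : Fin r ↪ J, G (y ∘ e) < (p - η) * Fintype.card (Fin r ↪ J)).card : ℝ)
      ≤ Real.exp (-(b * η ^ 2 / 4)) * (Fintype.card V : ℝ) ^ Fintype.card J := by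
  have hV : (0 : ℝ) < Fintype.card V := by exact_mod_cast Fintype.card_pos
  have hVr : (0 : ℝ) < (Fintype.card V : ℝ) ^ r := by positivity
  set p0 : ℝ := (∑ w, G w) / (Fintype.card V : ℝ) ^ r with hp0
  have hpp : p ≤ p0 := by rw [hp0, le_div_iff₀ hVr]; exact hp
  have hp0' : p0 * Fintype.card (Fin r → V) = ∑ w, G w := by
    rw [hp0, Fintype.card_fun]; push_cast; rw [Fintype.card_fin]; field_simp
  set t : ℝ := η / 2 with ht
  have ht0 : 0 ≤ t := by positivity
  have ht1 : t ≤ 1 := by rw [ht]; linarith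
  let Em : Fin b → (Fin r ↪ J) := fun s =>
    ⟨fun i => e0 (s, i), fun i i' h => by simpa using e0.injective h⟩
  let S : Equiv.Perm J → (J → V) → ℝ := fun σ y =>
    ∑ s, G (y ∘ (Em s).trans σ.toEmbedding)
  set P : ℝ := ((Fintype.card (Equiv.Perm J) : ℕ) : ℝ) with hP
  have hPpos : 0 < P := by rw [hP]; exact_mod_cast Fintype.card_pos
  have hS : ∀ y : J → V, (Fintype.card (Fin r ↪ J) : ℝ) * ∑ σ, S σ y
      = P * b * ∑ e : Fin r ↪ J, G (y ∘ e) := by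
    intro y
    simp only [S]
    rw [sum_comm, mul_sum]
    have : ∀ s, (Fintype.card (Fin r ↪ J) : ℝ) *
        ∑ σ : Equiv.Perm J, G (y ∘ (Em s).trans σ.toEmbedding)
        = P * ∑ e : Fin r ↪ J, G (y ∘ e) := fun s =>
      sum_perm (fun e => G (y ∘ e)) (Em s)
    simp only [this, sum_const, nsmul_eq_mul, card_univ, Fintype.card_fin]
    ring
  -- the exponential moment of each single block average
  have hmom : ∀ σ : Equiv.Perm J, ∑ y : J → V, Real.exp (-(t * S σ y))
      ≤ (Fintype.card V : ℝ) ^ Fintype.card J * Real.exp (b * (-(p0 * t) + t ^ 2)) := by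
    intro σ
    have h1 : ∀ y : J → V, Real.exp (-(t * S σ y))
        = (fun z : Fin b × Fin r → V => ∏ s, Real.exp (-(t * G (fun i => z (s, i)))))
          (y ∘ (e0.trans σ.toEmbedding)) := by
      intro y
      simp only [S]
      rw [← Real.exp_sum, mul_sum, sum_neg_distrib]
      rfl
    simp only [h1]
    rw [sum_marg (e0.trans σ.toEmbedding)
      (fun z : Fin b × Fin r → V => ∏ s, Real.exp (-(t * G (fun i => z (s, i))))),
      sum_blocks b r (fun w => Real.exp (-(t * G w)))]
    have hle : Fintype.card (Fin b × Fin r) ≤ Fintype.card J :=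
      Fintype.card_le_of_embedding e0
    have h2 := sum_exp_le G hG p0 t ht0 ht1 hp0'
    calc (Fintype.card V : ℝ) ^ (Fintype.card J - Fintype.card (Fin b × Fin r)) *
          (∑ w, Real.exp (-(t * G w))) ^ b
        ≤ (Fintype.card V : ℝ) ^ (Fintype.card J - Fintype.card (Fin b × Fin r)) *
          (Fintype.card (Fin r → V) * Real.exp (-(p0 * t) + t ^ 2)) ^ b := by
          gcongr
      _ = _ := by
          rw [mul_pow, ← Real.exp_nat_mul, ← mul_assoc]
          congr 1
          rw [Fintype.card_fun]
          push_cast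
          rw [← pow_mul, ← pow_add]
          congr 1
          simp only [Fintype.card_prod, Fintype.card_fin] at hle ⊢
          rw [mul_comm r b]
          omega
  -- Markov's inequality, with Jensen's inequality for the average over permutations
  have hpt : ∀ y : J → V,
      (if ∑ e : Fin r ↪ J, G (y ∘ e) < (p - η) * Fintype.card (Fin r ↪ J) then (1 : ℝ) else 0)
      ≤ Real.exp (t * b * (p0 - η)) * ∑ σ, P⁻¹ * Real.exp (-(t * S σ y)) := by
    intro y
    split_ifs with h
    · have hemb : (0 : ℝ) < Fintype.card (Fin r ↪ J) := by
        rcases (Nat.cast_nonneg (α := ℝ) (Fintype.card (Fin r ↪ J))).eq_or_lt with h0 | h0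
        · rw [← h0, mul_zero] at h
          exact absurd h (not_lt.mpr (sum_nonneg fun e _ => by
            rcases hG (y ∘ e) with h | h <;> simp [h]))
        · exact h0
      have hjen := convexOn_exp.map_sum_le (t := univ) (w := fun _ : Equiv.Perm J => P⁻¹)
        (p := fun σ => -(t * S σ y)) (fun _ _ => by positivity)
        (by simp [hP]) (fun _ _ => Set.mem_univ _)
      simp only [smul_eq_mul] at hjen
      refine le_trans ?_ (mul_le_mul_of_nonneg_left hjen (Real.exp_pos _).le)
      rw [← Real.exp_add]
      refine Real.one_le_exp ?_
      rw [← mul_sum, sum_neg_distrib, ← mul_sum]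
      have h3 : P⁻¹ * ∑ σ, S σ y ≤ b * (p0 - η) := by
        have h4 : (Fintype.card (Fin r ↪ J) : ℝ) * ∑ σ, S σ y
            ≤ Fintype.card (Fin r ↪ J) * (P * (b * (p0 - η))) := by
          rw [hS y]
          have h5 : ∑ e : Fin r ↪ J, G (y ∘ e) ≤ (p0 - η) * Fintype.card (Fin r ↪ J) :=
            h.le.trans (by gcongr)
          calc P * b * ∑ e : Fin r ↪ J, G (y ∘ e)
              ≤ P * b * ((p0 - η) * Fintype.card (Fin r ↪ J)) := by gcongr
            _ = _ := by ring
        have h6 := le_of_mul_le_mul_left h4 hemb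
        rw [inv_mul_le_iff₀ hPpos]
        exact h6
      nlinarith [mul_le_mul_of_nonneg_left h3 ht0]
    · exact mul_nonneg (Real.exp_pos _).le
        (sum_nonneg fun σ _ => mul_nonneg (by positivity) (Real.exp_pos _).le)
  have hcard : ((univ.filter fun y : J → V =>
        ∑ e : Fin r ↪ J, G (y ∘ e) < (p - η) * Fintype.card (Fin r ↪ J)).card : ℝ)
      = ∑ y : J → V, (if ∑ e : Fin r ↪ J, G (y ∘ e) < (p - η) * Fintype.card (Fin r ↪ J)
          then (1 : ℝ) else 0) := by
    rw [card_filter]; push_cast; rfl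
  rw [hcard]
  calc _ ≤ ∑ y : J → V, Real.exp (t * b * (p0 - η)) *
          ∑ σ, P⁻¹ * Real.exp (-(t * S σ y)) := sum_le_sum fun y _ => hpt y
    _ = Real.exp (t * b * (p0 - η)) * (P⁻¹ *
          ∑ σ : Equiv.Perm J, ∑ y, Real.exp (-(t * S σ y))) := by
        rw [← mul_sum, sum_comm]
        simp only [mul_sum]
    _ ≤ Real.exp (t * b * (p0 - η)) * (P⁻¹ * ∑ σ : Equiv.Perm J,
          ((Fintype.card V : ℝ) ^ Fintype.card J * Real.exp (b * (-(p0 * t) + t ^ 2)))) := by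
        gcongr with σ
        exact hmom σ
    _ = (Fintype.card V : ℝ) ^ Fintype.card J *
          (Real.exp (t * b * (p0 - η)) * Real.exp (b * (-(p0 * t) + t ^ 2))) := by
        rw [sum_const, nsmul_eq_mul, card_univ, ← hP]
        field_simp
    _ = _ := by
        rw [← Real.exp_add, mul_comm]
        congr 2
        rw [ht]
        ring

/-! ### Ordered degrees of pairs -/

/-- The falling factorial `(n - c)(n - c - 1) ⋯` with `q` factors is `n ^ q` up to a relative
error `q (q + c) / n`. The natural-number subtraction is harmless, as the left-hand side is
nonpositive once `q + c > n`. -/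
theorem desc_lower (n c q : ℕ) (hn : 0 < n) :
    (n : ℝ) ^ q * (1 - q * (q + c) / n) ≤ ((n - c).descFactorial q : ℝ) := by
  have hn' : (0 : ℝ) < n := by exact_mod_cast hn
  by_cases h : q + c ≤ n
  · have h1 : ((n - c + 1 - q : ℕ) : ℝ) ^ q ≤ ((n - c).descFactorial q : ℝ) := by
      exact_mod_cast Nat.pow_sub_le_descFactorial (n - c) q
    refine le_trans ?_ h1
    have h2 : (n : ℝ) * (1 + -((q + c) / n)) ≤ ((n - c + 1 - q : ℕ) : ℝ) := by
      have : n - c + 1 - q = n - (q + c) + 1 := by omega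
      rw [this]
      push_cast [Nat.cast_sub h]
      field_simp
      linarith
    have h3 : (0 : ℝ) ≤ 1 + -((q + c) / n) := by
      have : ((q : ℝ) + c) / n ≤ 1 := by
        rw [div_le_one hn']; exact_mod_cast h
      linarith
    have h4 := one_add_mul_le_pow (a := -(((q : ℝ) + c) / n)) (by linarith) q
    calc (n : ℝ) ^ q * (1 - q * (q + c) / n)
        = (n : ℝ) ^ q * (1 + q * -((q + c) / n)) := by ring
      _ ≤ (n : ℝ) ^ q * (1 + -((q + c) / n)) ^ q := by gcongr
      _ = ((n : ℝ) * (1 + -((q + c) / n))) ^ q := by rw [mul_pow]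
      _ ≤ _ := by gcongr
  · rcases Nat.eq_zero_or_pos q with rfl | hq
    · simp
    refine le_trans ?_ (Nat.cast_nonneg _)
    refine mul_nonpos_of_nonneg_of_nonpos (by positivity) ?_
    rw [sub_nonpos, one_le_div hn']
    have h5 : (n : ℝ) ≤ q + c := by exact_mod_cast (not_le.mp h).le
    have h6 : (1 : ℝ) ≤ q := by exact_mod_cast hq
    nlinarith

theorem card_injective {I V : Type*} [Fintype I] [Fintype V] [DecidableEq I] [DecidableEq V] :
    (univ.filter fun f : I → V => Function.Injective f).card
      = (Fintype.card V).descFactorial (Fintype.card I) := by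
  rw [← Fintype.card_embedding_eq, ← Fintype.card_subtype]
  exact Fintype.card_congr (Equiv.subtypeInjectiveEquivEmbedding I V)

open scoped Classical in
theorem card_not_injective {I : Type*} [Fintype I] (n : ℕ) (hn : 0 < n) :
    ((univ.filter fun f : I → Fin n => ¬ Function.Injective f).card : ℝ)
      ≤ (Fintype.card I : ℝ) ^ 2 / n * (n : ℝ) ^ Fintype.card I := by
  have h1 := card_filter_add_card_filter_not (s := (univ : Finset (I → Fin n)))
    (fun f => Function.Injective f)
  have h2 : (univ.filter fun f : I → Fin n => Function.Injective f).card
      = n.descFactorial (Fintype.card I) := by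
    convert card_injective (I := I) (V := Fin n)
    simp
  have h3 := desc_lower n 0 (Fintype.card I) hn
  rw [h2, card_univ, Fintype.card_fun, Fintype.card_fin] at h1
  have h4 : (n.descFactorial (Fintype.card I) : ℝ) + ((univ.filter fun f : I → Fin n =>
    ¬ Function.Injective f).card : ℝ) = (n : ℝ) ^ Fintype.card I := by exact_mod_cast h1
  simp only [Nat.sub_zero, Nat.cast_zero, add_zero] at h3
  have : (n : ℝ) ^ Fintype.card I * (1 - Fintype.card I * Fintype.card I / n)
    = (n : ℝ) ^ Fintype.card I -
      (Fintype.card I : ℝ) ^ 2 / n * (n : ℝ) ^ Fintype.card I := by ring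
  linarith

/-- The ordered degree of the pair `u, v`: the number of `r`-tuples that complete `{u, v}` to
an edge. -/
def tup {γ : Type*} [Fintype γ] [DecidableEq γ] (r : ℕ) (E : Finset (Finset γ)) (u v : γ) : ℕ :=
  (univ.filter fun w : Fin r → γ => insert u (insert v (univ.image w)) ∈ E).card

theorem tup_le {γ : Type*} [Fintype γ] [DecidableEq γ] (r : ℕ) (E : Finset (Finset γ))
    (u v : γ) : tup r E u v ≤ Fintype.card γ ^ r := by
  refine (card_filter_le _ _).trans ?_
  simp

/-- If two vertices and an `r`-tuple together form a set of size `r + 2`, then all of them are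
distinct. -/
theorem tuple_edge {γ : Type*} [DecidableEq γ] {r : ℕ} {u v : γ}
    {w : Fin r → γ} (h : (insert u (insert v (univ.image w))).card = r + 2) :
    u ≠ v ∧ Function.Injective w ∧ ∀ i, w i ≠ u ∧ w i ≠ v := by
  have h1 : (univ.image w).card ≤ r := by simpa using card_image_le (s := univ) (f := w)
  have h2 := card_insert_le v (univ.image w)
  have h3 := card_insert_le u (insert v (univ.image w))
  have hu : u ∉ insert v (univ.image w) := fun hu => by
    rw [insert_eq_of_mem hu] at h; omega
  have hv : v ∉ univ.image w := fun hv => by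
    rw [insert_eq_of_mem hv] at h
    have h3 := card_insert_le u (univ.image w)
    omega
  rw [card_insert_of_notMem hu, card_insert_of_notMem hv] at h
  refine ⟨fun e => hu (by simp [e]), ?_, fun i => ⟨fun e => hu ?_, fun e => hv ?_⟩⟩
  · have h4 : (univ.image w).card = (univ : Finset (Fin r)).card := by simp; omega
    exact fun a b hab => (card_image_iff.mp h4) (by simp) (by simp) hab
  · rw [← e]; simp
  · rw [← e]; simp

/-- Each edge through `{u, v}` is completed by exactly `r!` ordered tuples. -/
theorem tup_eq {γ : Type*} [Fintype γ] [DecidableEq γ] (r : ℕ) (E : Finset (Finset γ))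
    (hE : ∀ e ∈ E, e.card = r + 2) (u v : γ) (huv : u ≠ v) :
    tup r E u v = r.factorial * degS E {u, v} := by
  unfold tup degS
  rw [card_eq_sum_card_fiberwise (f := fun w : Fin r → γ => insert u (insert v (univ.image w)))
    (t := E.filter fun e => {u, v} ⊆ e)]
  · rw [sum_const_nat (m := r.factorial), mul_comm]
    intro e he
    obtain ⟨heE, hsub⟩ := mem_filter.mp he
    have hcard := hE e heE
    have hR : (e \ {u, v}).card = r := by
      rw [card_sdiff_of_subset hsub, card_pair huv, hcard]; rfl
    have h1 : Fintype.card (Fin r ↪ ↥(e \ {u, v})) = r.factorial := by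
      rw [Fintype.card_embedding_eq, Fintype.card_coe, hR, Fintype.card_fin,
        Nat.descFactorial_self]
    rw [← h1, ← card_univ]
    symm
    refine card_bij (fun g _ => fun i => (g i : γ)) ?_ ?_ ?_
    · intro g _
      have h2 : univ.image (fun i => (g i : γ)) = e \ {u, v} := by
        refine eq_of_subset_of_card_le ?_ ?_
        · intro x hx
          obtain ⟨i, -, rfl⟩ := mem_image.mp hx
          exact (g i).2
        · rw [card_image_of_injective univ (f := fun i => (g i : γ))
            (Subtype.val_injective.comp g.injective), hR]
          simp
      have h3 : insert u (insert v (e \ {u, v})) = e := by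
        ext x
        have hu : u ∈ e := hsub (by simp)
        have hv : v ∈ e := hsub (by simp)
        simp only [mem_insert, Finset.mem_sdiff, mem_singleton]
        by_cases hxu : x = u
        · simp [hxu, hu]
        by_cases hxv : x = v
        · simp [hxv, hv]
        simp [hxu, hxv]
      simp only [mem_filter, mem_univ, h2, h3, heE, and_self]
    · intro g _ g' _ h
      ext i
      exact congrFun h i
    · intro w hw
      obtain ⟨hw1, hw2⟩ := mem_filter.mp hw
      have hw3 : (insert u (insert v (univ.image w))).card = r + 2 := by rw [hw2, hcard]
      obtain ⟨-, hinj, hne⟩ := tuple_edge hw3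
      refine ⟨⟨fun i => ⟨w i, ?_⟩, fun i j hij => hinj (by simpa using hij)⟩, mem_univ _, rfl⟩
      rw [Finset.mem_sdiff]
      refine ⟨?_, by simpa using hne i⟩
      rw [← hw2]
      simp
  · intro w hw
    have hw' := (mem_filter.mp hw).2
    simp only [coe_filter, Set.mem_ofPred_eq]
    refine ⟨hw', ?_⟩
    intro x hx
    simp only [mem_insert, mem_singleton] at hx ⊢
    tauto

theorem minDeg_le {γ : Type*} [Fintype γ] [DecidableEq γ] (E : Finset (Finset γ))
    (u v : γ) (huv : u ≠ v) : minDeg 2 univ E ≤ degS E {u, v} :=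
  Nat.sInf_le ⟨{u, v}, subset_univ _, card_pair huv, rfl⟩

theorem le_minDeg {n : ℕ} (hn : 2 ≤ n) (E : Finset (Finset (Fin n))) (d : ℕ)
    (h : ∀ u v : Fin n, u ≠ v → d ≤ degS E {u, v}) : d ≤ minDeg 2 univ E := by
  have hne : {d | ∃ S ⊆ (univ : Finset (Fin n)), S.card = 2 ∧ d = degS E S}.Nonempty :=
    ⟨_, {⟨0, by omega⟩, ⟨1, by omega⟩}, subset_univ _,
      card_pair (a := (⟨0, by omega⟩ : Fin n)) (b := ⟨1, by omega⟩) (by simp), rfl⟩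
  obtain ⟨S, -, hS, hd⟩ := Nat.sInf_mem hne
  unfold minDeg
  rw [hd]
  obtain ⟨u, v, huv, rfl⟩ := card_eq_two.mp hS
  exact h u v huv

/-! ### Sampling -/

/-- The `k`-graph on `Fin m` obtained by pulling back the edge set `E` along `f`: its edges are
the `k`-sets which `f` maps onto an edge. -/
def pull {m n : ℕ} (k : ℕ) (f : Fin m → Fin n) (E : Finset (Finset (Fin n))) :
    Finset (Finset (Fin m)) :=
  univ.filter fun e => e.card = k ∧ e.image f ∈ E

open scoped Classical in
/-- Few maps `f` give the pair `i, j` a pulled-back degree which is too small: once the images of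
`i` and `j` are fixed, this degree dominates a U-statistic in the remaining `m - 2` values, to
which `conc` applies. -/
theorem bad_pair {m n r b : ℕ} (hn : 0 < n) (E : Finset (Finset (Fin n)))
    (i j : Fin m) (hij : i ≠ j) (hb : b * r ≤ m - 2) (p η : ℝ) (hη : 0 < η) (hη1 : η ≤ 2)
    (hp : ∀ u v, u ≠ v → p * (n : ℝ) ^ r ≤ tup r E u v)
    (hE : ∀ e ∈ E, e.card = r + 2) :
    ((univ.filter fun f : Fin m → Fin n => Function.Injective f ∧
        (tup r (pull (r + 2) f E) i j : ℝ) < (p - η) * (m - 2).descFactorial r).card : ℝ)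
      ≤ Real.exp (-(b * η ^ 2 / 4)) * (n : ℝ) ^ m := by
  have : Nonempty (Fin n) := ⟨⟨0, hn⟩⟩
  set B := univ.filter fun f : Fin m → Fin n => Function.Injective f ∧
        (tup r (pull (r + 2) f E) i j : ℝ) < (p - η) * (m - 2).descFactorial r with hB
  let J := {x // x ∈ ({i, j}ᶜ : Finset (Fin m))}
  have hJ : Fintype.card J = m - 2 := by
    rw [Fintype.card_coe, card_compl, card_pair hij, Fintype.card_fin]
  have hm : 2 ≤ m := by
    have := card_le_univ ({i, j} : Finset (Fin m))
    rwa [card_pair hij, Fintype.card_fin] at this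
  obtain ⟨e0⟩ : Nonempty (Fin b × Fin r ↪ J) := by
    apply Function.Embedding.nonempty_of_card_le
    rw [hJ]; simpa using hb
  have hemb : Fintype.card (Fin r ↪ J) = (m - 2).descFactorial r := by
    rw [Fintype.card_embedding_eq, hJ, Fintype.card_fin]
  have hfib : ∀ q : Fin n × Fin n, ((B.filter fun f => (f i, f j) = q).card : ℝ)
      ≤ Real.exp (-(b * η ^ 2 / 4)) * (n : ℝ) ^ (m - 2) := by
    rintro ⟨u, v⟩
    by_cases huv : u = v
    · have : (B.filter fun f => (f i, f j) = (u, v)) = ∅ := by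
        rw [filter_eq_empty_iff]
        intro f hf h
        simp only [Prod.mk.injEq] at h
        rw [hB, mem_filter] at hf
        exact hij (hf.2.1 (by rw [h.1, h.2, huv]))
      rw [this]
      simp only [card_empty, Nat.cast_zero]
      positivity
    let G : (Fin r → Fin n) → ℝ := fun w =>
      if insert u (insert v (univ.image w)) ∈ E then 1 else 0
    have hG : ∀ w, G w = 0 ∨ G w = 1 := fun w => by simp only [G]; split_ifs <;> simp
    have hGs : ∑ w, G w = tup r E u v := by
      simp only [G, tup, card_filter]; push_cast; rfl
    have h1 := conc e0 G hG p η hη hη1 (by rw [hGs, Fintype.card_fin]; exact hp u v huv)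
    rw [hemb, hJ, Fintype.card_fin] at h1
    refine le_trans ?_ h1
    rw [Nat.cast_le]
    refine card_le_card_of_injOn (fun f => fun x : J => f x.1) ?_ ?_
    · intro f hf
      rw [mem_coe, mem_filter, hB, mem_filter, Prod.mk.injEq] at hf
      obtain ⟨⟨-, hinj, hlt⟩, rfl, rfl⟩ := hf
      rw [mem_coe, mem_filter]
      refine ⟨mem_univ _, lt_of_le_of_lt ?_ hlt⟩
      have h3 : ∑ e : Fin r ↪ J, G ((fun x : J => f x.1) ∘ e)
          = ((univ.filter fun e : Fin r ↪ J => insert (f i) (insert (f j)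
            (univ.image ((fun x : J => f x.1) ∘ e))) ∈ E).card : ℝ) := by
        simp only [G, card_filter]; push_cast; rfl
      rw [h3, Nat.cast_le, tup]
      refine card_le_card_of_injOn (fun e => fun s => ((e s : J) : Fin m)) ?_ ?_
      · intro e he
        rw [mem_coe, mem_filter] at he ⊢
        refine ⟨mem_univ _, ?_⟩
        have h4 : (insert i (insert j (univ.image fun s => ((e s : J) : Fin m)))).image f
            = insert (f i) (insert (f j) (univ.image ((fun x : J => f x.1) ∘ e))) := by
          rw [image_insert, image_insert, image_image]
          rfl
        rw [pull, mem_filter, h4]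
        refine ⟨mem_univ _, ?_, he.2⟩
        rw [← card_image_of_injective _ hinj, h4]
        exact hE _ he.2
      · intro e _ e' _ h
        ext s
        exact congrArg Fin.val (congrFun h s)
    · intro f hf f' hf' h
      rw [mem_coe, mem_filter, Prod.mk.injEq] at hf hf'
      funext x
      by_cases hx : x ∈ ({i, j}ᶜ : Finset (Fin m))
      · exact congrFun h ⟨x, hx⟩
      · simp only [mem_compl, not_not, mem_insert, mem_singleton] at hx
        rcases hx with rfl | rfl
        · rw [hf.2.1, hf'.2.1]
        · rw [hf.2.2, hf'.2.2]
  have h2 := card_eq_sum_card_fiberwise (f := fun f : Fin m → Fin n => (f i, f j)) (s := B)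
    (t := univ) (by intro x _; simp)
  rw [h2]
  push_cast
  refine (sum_le_sum fun q _ => hfib q).trans (le_of_eq ?_)
  rw [sum_const, nsmul_eq_mul, card_univ]
  simp only [Fintype.card_prod, Fintype.card_fin]
  push_cast
  obtain ⟨m', rfl⟩ : ∃ m', m = m' + 2 := ⟨m - 2, by omega⟩
  simp only [Nat.add_sub_cancel]
  ring

/-- The exponential failure probability of a single pair beats the union bound over all
`m ^ 2` pairs. -/
theorem decay (r : ℕ) (hr : 1 ≤ r) (η : ℝ) (hη : 0 < η) :
    ∃ M : ℕ, ∀ m ≥ M, (m : ℝ) ^ 2 * Real.exp (-(((m - 2) / r : ℕ) * η ^ 2 / 4)) ≤ 1 / 4 := by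
  have hr' : (0 : ℝ) < r := by exact_mod_cast hr
  set c : ℝ := η ^ 2 / 4 / r with hc
  have hc0 : 0 < c := by positivity
  have h1 : Tendsto (fun m : ℕ => c * (m : ℝ)) atTop atTop :=
    Tendsto.const_mul_atTop hc0 tendsto_natCast_atTop_atTop
  have h2 := (Real.tendsto_pow_mul_exp_neg_atTop_nhds_zero 2).comp h1
  have h3 := h2.eventually_le_const
    (show 0 < c ^ 2 / (4 * Real.exp (c * (2 + r))) by positivity)
  obtain ⟨M, hM⟩ := eventually_atTop.mp h3
  refine ⟨M, fun m hm => ?_⟩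
  have h4 := hM m hm
  simp only [Function.comp] at h4
  rw [le_div_iff₀ (by positivity)] at h4
  have h5 : (m : ℝ) - 2 - r ≤ ((m - 2) / r : ℕ) * r := by
    have h6 : m ≤ (m - 2) / r * r + r + 2 := by
      have := Nat.div_add_mod (m - 2) r
      have := Nat.mod_lt (m - 2) (show 0 < r by omega)
      have := mul_comm ((m - 2) / r) r
      omega
    have h7 : (m : ℝ) ≤ ((m - 2) / r : ℕ) * r + r + 2 := by exact_mod_cast h6
    linarith
  have h8 : Real.exp (-(((m - 2) / r : ℕ) * η ^ 2 / 4))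
      ≤ Real.exp (c * (2 + r)) * Real.exp (-(c * m)) := by
    rw [← Real.exp_add]
    apply Real.exp_le_exp.mpr
    have h9 : c * r = η ^ 2 / 4 := by rw [hc]; field_simp
    have h10 : (((m - 2) / r : ℕ) : ℝ) * η ^ 2 / 4 = c * (((m - 2) / r : ℕ) * r) := by
      rw [mul_div_assoc, ← h9]; ring
    rw [h10]
    nlinarith
  have h11 : c ^ 2 * ((m : ℝ) ^ 2 * (Real.exp (c * (2 + r)) * Real.exp (-(c * m))))
      ≤ c ^ 2 * (1 / 4) := by nlinarith
  have h12 := le_of_mul_le_mul_left h11 (by positivity)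
  exact (mul_le_mul_of_nonneg_left h8 (by positivity)).trans h12

open scoped Classical in
/-- The sampling lemma: a random `m`-tuple of vertices of a large `r + 2`-graph in which every
pair has relative degree at least `a` spans, with probability at least one half, an
`r + 2`-graph on `m` vertices in which every pair has relative degree at least `a - η`. -/
theorem sampling (r : ℕ) (hr : 1 ≤ r) (η : ℝ) (hη : 0 < η) (hη1 : η ≤ 2) :
    ∃ M : ℕ, ∀ m ≥ M, ∃ N0 : ℕ, ∀ n ≥ N0, ∀ E : Finset (Finset (Fin n)),
      (∀ e ∈ E, e.card = r + 2) → ∀ a : ℝ, a ≤ 2 →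
      (∀ u v, u ≠ v → a * (n - 2).descFactorial r ≤ tup r E u v) →
      ∃ A : Finset (Fin m → Fin n), (n : ℝ) ^ m / 2 ≤ A.card ∧
        ∀ f ∈ A, Function.Injective f ∧ ∀ i j, i ≠ j →
          (a - η) * (m - 2).descFactorial r ≤ tup r (pull (r + 2) f E) i j := by
  obtain ⟨M, hM⟩ := decay r hr (η / 2) (by positivity)
  refine ⟨M, fun m hm => ?_⟩
  obtain ⟨N1, hN1⟩ := exists_nat_ge (4 * (m : ℝ) ^ 2 + 4 * r * (r + 2) / η + 1)
  refine ⟨N1, fun n hn E hE a ha h => ?_⟩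
  have hnr : 4 * (m : ℝ) ^ 2 + 4 * r * (r + 2) / η + 1 ≤ n :=
    hN1.trans (by exact_mod_cast hn)
  have hq : 0 ≤ 4 * (r : ℝ) * (r + 2) / η := by positivity
  have hn1 : (1 : ℝ) ≤ n := by nlinarith [sq_nonneg (m : ℝ)]
  have hn0 : 0 < n := by exact_mod_cast hn1
  -- passing from the falling factorial to the power costs at most `η / 2`
  have hp : ∀ u v, u ≠ v → (a - η / 2) * (n : ℝ) ^ r ≤ tup r E u v := by
    intro u v huv
    rcases le_or_gt a 0 with ha0 | ha0
    · refine le_trans ?_ (Nat.cast_nonneg _)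
      exact mul_nonpos_of_nonpos_of_nonneg (by linarith) (by positivity)
    refine le_trans ?_ (h u v huv)
    have h1 := desc_lower n 2 r hn0
    have h2 : (r : ℝ) * (r + 2) / n ≤ η / 4 := by
      rw [div_le_iff₀ (by linarith)]
      have : 4 * (r : ℝ) * (r + 2) / η ≤ n := by nlinarith [sq_nonneg (m : ℝ)]
      rw [div_le_iff₀ hη] at this
      linarith
    have h3 : a * ((r : ℝ) * (r + 2) / n) ≤ η / 2 := by
      have : 0 ≤ (r : ℝ) * (r + 2) / n := by positivity
      nlinarith
    calc (a - η / 2) * (n : ℝ) ^ r ≤ (a - a * ((r : ℝ) * (r + 2) / n)) * (n : ℝ) ^ r := by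
          gcongr
      _ = a * ((n : ℝ) ^ r * (1 - r * (r + (2 : ℕ)) / n)) := by push_cast; ring
      _ ≤ _ := by gcongr
  set A := univ.filter fun f : Fin m → Fin n => Function.Injective f ∧
        ∀ i j, i ≠ j → (a - η) * (m - 2).descFactorial r ≤ tup r (pull (r + 2) f E) i j
  set B0 := univ.filter fun f : Fin m → Fin n => ¬ Function.Injective f
  let B : Fin m × Fin m → Finset (Fin m → Fin n) := fun q =>
    if q.1 = q.2 then ∅ else
      univ.filter fun f : Fin m → Fin n => Function.Injective f ∧
        (tup r (pull (r + 2) f E) q.1 q.2 : ℝ)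
          < (a - η / 2 - η / 2) * (m - 2).descFactorial r
  have hcov : (univ : Finset (Fin m → Fin n)) ⊆ A ∪ (B0 ∪ univ.biUnion B) := by
    intro f _
    simp only [mem_union, mem_biUnion, mem_univ, true_and]
    by_cases h0 : Function.Injective f
    · by_cases h1 : ∀ i j, i ≠ j →
        (a - η) * (m - 2).descFactorial r ≤ tup r (pull (r + 2) f E) i j
      · left; exact mem_filter.mpr ⟨mem_univ _, h0, h1⟩
      · push Not at h1
        obtain ⟨i, j, hij, h1⟩ := h1
        right; right
        refine ⟨(i, j), ?_⟩
        simp only [B, if_neg hij]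
        refine mem_filter.mpr ⟨mem_univ _, h0, ?_⟩
        have : a - η / 2 - η / 2 = a - η := by ring
        rw [this]
        exact h1
    · right; left; exact mem_filter.mpr ⟨mem_univ _, h0⟩
  have hB : ∀ q ∈ (univ : Finset (Fin m × Fin m)), ((B q).card : ℝ)
      ≤ Real.exp (-(((m - 2) / r : ℕ) * (η / 2) ^ 2 / 4)) * (n : ℝ) ^ m := by
    rintro ⟨i, j⟩ -
    simp only [B]
    split_ifs with hij
    · simp only [card_empty, Nat.cast_zero]; positivity
    · exact bad_pair (b := (m - 2) / r) hn0 E i j hij (Nat.div_mul_le_self _ _) (a - η / 2)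
        (η / 2) (by positivity) (by linarith) hp hE
  have hB0 : ((B0.card : ℕ) : ℝ) ≤ 1 / 4 * (n : ℝ) ^ m := by
    have h0 := card_not_injective (I := Fin m) n hn0
    rw [Fintype.card_fin] at h0
    have h0' : ((B0.card : ℕ) : ℝ) ≤ (m : ℝ) ^ 2 / n * (n : ℝ) ^ m := by
      refine le_trans (le_of_eq ?_) h0
      congr!
    refine h0'.trans (mul_le_mul_of_nonneg_right ?_ (by positivity))
    rw [div_le_iff₀ (by linarith)]
    linarith
  have h1 : ((n ^ m : ℕ) : ℝ) ≤ A.card + (B0.card + ∑ q, ((B q).card : ℝ)) := by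
    have h2 := card_le_card hcov
    rw [card_univ, Fintype.card_fun, Fintype.card_fin, Fintype.card_fin] at h2
    have h3 := card_union_le A (B0 ∪ univ.biUnion B)
    have h4 := card_union_le B0 (univ.biUnion B)
    have h5 := card_biUnion_le (s := univ) (t := B)
    have h6 : n ^ m ≤ A.card + (B0.card + ∑ q, (B q).card) := by omega
    exact_mod_cast h6
  have h7 : ∑ q, ((B q).card : ℝ) ≤ 1 / 4 * (n : ℝ) ^ m := by
    refine (sum_le_sum hB).trans ?_
    rw [sum_const, nsmul_eq_mul, card_univ]
    simp only [Fintype.card_prod, Fintype.card_fin]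
    rw [← mul_assoc]
    gcongr
    have := hM m hm
    push_cast
    nlinarith
  push_cast at h1
  exact ⟨A, by linarith, fun f hf => (mem_filter.mp hf).2⟩

/-! ### Existence of the density -/

/-- The supremum defining `exDeg` is attained: the edgeless hypergraph is a candidate because
`EF` has an edge. -/
theorem exDeg_spec [DecidableEq α] (k n : ℕ) (VF : Finset α) (EF : Finset (Finset α))
    (hEF : EF.Nonempty) : ∃ E : Finset (Finset (Fin n)), (∀ e ∈ E, e.card = k) ∧
      ¬ ContainsCopy VF EF univ E ∧ exDeg k 2 n VF EF = minDeg 2 univ E := by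
  let S : Set ℕ := {d | ∃ E : Finset (Finset (Fin n)), (∀ e ∈ E, e.card = k) ∧
    ¬ ContainsCopy VF EF univ E ∧ d = minDeg 2 univ E}
  refine Nat.sSup_mem (s := S) ⟨_, ∅, by simp, ?_, rfl⟩ ?_
  · rintro ⟨f, -, -, h⟩
    obtain ⟨e, he⟩ := hEF
    simpa using h e he
  · refine ((Set.finite_range fun E : Finset (Finset (Fin n)) =>
      minDeg 2 univ E).subset ?_).bddAbove
    rintro _ ⟨E, -, -, rfl⟩
    exact ⟨E, rfl⟩

theorem le_exDeg [DecidableEq α] (k n : ℕ) (VF : Finset α) (EF : Finset (Finset α))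
    (E : Finset (Finset (Fin n))) (hE : ∀ e ∈ E, e.card = k)
    (hF : ¬ ContainsCopy VF EF univ E) : minDeg 2 univ E ≤ exDeg k 2 n VF EF := by
  refine le_csSup ?_ ⟨E, hE, hF, rfl⟩
  refine ((Set.finite_range fun E : Finset (Finset (Fin n)) =>
      minDeg 2 univ E).subset ?_).bddAbove
  rintro _ ⟨E, -, -, rfl⟩
  exact ⟨E, rfl⟩

theorem choose_desc (r n : ℕ) : (r.factorial : ℝ) * ((n - 2).choose r : ℝ)
    = ((n - 2).descFactorial r : ℝ) := by
  rw [Nat.descFactorial_eq_factorial_mul_choose]; push_cast; rfl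

/-- A lower bound for the ordered degree of all pairs is a lower bound for the minimum
pair degree. -/
theorem minDeg_of_tup {n r : ℕ} (hn : 2 ≤ n) (E : Finset (Finset (Fin n)))
    (hE : ∀ e ∈ E, e.card = r + 2) (a : ℝ)
    (h : ∀ u v, u ≠ v → a * (n - 2).descFactorial r ≤ tup r E u v) :
    a * ((n - 2).choose r : ℝ) ≤ minDeg 2 univ E := by
  have h1 : ⌈a * ((n - 2).choose r : ℝ)⌉₊ ≤ minDeg 2 univ E := by
    refine le_minDeg hn E _ fun u v huv => ?_
    rw [Nat.ceil_le]
    have h2 := h u v huv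
    rw [tup_eq r E hE u v huv, ← choose_desc] at h2
    push_cast at h2
    have h3 : (0 : ℝ) < r.factorial := by exact_mod_cast Nat.factorial_pos r
    refine le_of_mul_le_mul_left ?_ h3
    linarith
  exact Nat.ceil_le.mp h1

theorem tup_of_minDeg {n r : ℕ} (E : Finset (Finset (Fin n)))
    (hE : ∀ e ∈ E, e.card = r + 2) (a : ℝ)
    (h : a * ((n - 2).choose r : ℝ) ≤ minDeg 2 univ E) (u v : Fin n) (huv : u ≠ v) :
    a * (n - 2).descFactorial r ≤ tup r E u v := by
  rw [tup_eq r E hE u v huv, ← choose_desc]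
  push_cast
  have h3 : (0 : ℝ) < r.factorial := by exact_mod_cast Nat.factorial_pos r
  have h4 : ((minDeg 2 univ E : ℕ) : ℝ) ≤ degS E {u, v} := by
    exact_mod_cast minDeg_le E u v huv
  nlinarith

theorem pull_card {m n k : ℕ} (f : Fin m → Fin n) (E : Finset (Finset (Fin n))) :
    ∀ e ∈ pull k f E, e.card = k := fun _ he => (mem_filter.mp he).2.1

/-- Along an injective map, a copy in the pullback gives a copy in the original hypergraph. -/
theorem pull_free [DecidableEq α] {m n k : ℕ} (f : Fin m → Fin n)
    (hf : Function.Injective f) (E : Finset (Finset (Fin n)))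
    (VF : Finset α) (EF : Finset (Finset α)) (h : ContainsCopy VF EF univ (pull k f E)) :
    ContainsCopy VF EF univ E := by
  obtain ⟨g, hg, -, hE⟩ := h
  refine ⟨f ∘ g, hf.comp_injOn hg, fun _ _ => mem_univ _, fun e he => ?_⟩
  rw [← image_image]
  exact (mem_filter.mp (hE e he)).2.2

/-- A bounded sequence which is nonincreasing up to an arbitrarily small error, in the sense that
late terms do not exceed an earlier term by more than `η`, converges. -/
theorem exists_limit (x : ℕ → ℝ) (h0 : ∀ n, 0 ≤ x n) (h2 : ∀ᶠ n in atTop, x n ≤ 2)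
    (h : ∀ η : ℝ, 0 < η → η ≤ 2 → ∃ M : ℕ, ∀ m ≥ M, ∀ᶠ n in atTop, x n ≤ x m + η) :
    ∃ L, Tendsto x atTop (nhds L) := by
  have hb : IsBoundedUnder (· ≤ ·) atTop x := ⟨2, h2⟩
  have hb' : IsBoundedUnder (· ≥ ·) atTop x := isBoundedUnder_of ⟨0, h0⟩
  have hc : IsCoboundedUnder (· ≤ ·) atTop x := hb'.isCoboundedUnder_le
  refine ⟨limsup x atTop, ?_⟩
  rw [Metric.tendsto_atTop]
  intro ε hε
  obtain ⟨M, hM⟩ := h (min (ε / 2) 2) (by positivity) (min_le_right _ _)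
  obtain ⟨M', hM'⟩ := eventually_atTop.mp
    (eventually_lt_of_limsup_lt (show limsup x atTop < limsup x atTop + ε by linarith) hb)
  refine ⟨max M M', fun m hm => ?_⟩
  have h3 := limsup_le_of_le hc (hM m (le_of_max_le_left hm))
  have h4 := hM' m (le_of_max_le_right hm)
  have h5 := min_le_left (ε / 2) 2
  rw [Real.dist_eq, abs_lt]
  constructor <;> linarith

/-- The pair-degree Turán density of a hypergraph with at least one edge exists. -/
theorem density_exists [DecidableEq α] (r : ℕ) (hr : 1 ≤ r) (VF : Finset α)
    (EF : Finset (Finset α)) (hEF : EF.Nonempty) :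
    ∃ x, HasTuranDensity (r + 2) 2 VF EF x := by
  unfold HasTuranDensity
  simp only [Nat.add_sub_cancel]
  have hpos : ∀ n, r + 2 ≤ n → (0 : ℝ) < ((n - 2).choose r : ℝ) := fun n hn => by
    exact_mod_cast Nat.choose_pos (by omega)
  set x : ℕ → ℝ := fun n => (exDeg (r + 2) 2 n VF EF : ℝ) / ((n - 2).choose r : ℝ) with hx
  have hle2 : ∀ᶠ n in atTop, x n ≤ 2 := by
    refine eventually_atTop.mpr ⟨2 * r * (r + 2) + r + 2, fun n hn => ?_⟩
    obtain ⟨E, hE, -, hd⟩ := exDeg_spec (r + 2) n VF EF hEF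
    have hn2 : r + 2 ≤ n := le_trans (by omega) hn
    have h1 : x n * ((n - 2).choose r : ℝ) ≤ minDeg 2 univ E := by
      rw [hx, ← hd]
      simp only
      rw [div_mul_cancel₀ _ (hpos n hn2).ne']
    have h2 := tup_of_minDeg E hE (x n) h1 ⟨0, by omega⟩ ⟨1, by omega⟩ (by simp)
    have h3 : ((tup r E ⟨0, by omega⟩ ⟨1, by omega⟩ : ℕ) : ℝ) ≤ (n : ℝ) ^ r := by
      have := tup_le r E ⟨0, by omega⟩ ⟨1, by omega⟩
      rw [Fintype.card_fin] at this
      exact_mod_cast this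
    have h4 := desc_lower n 2 r (by omega)
    have hn0 : (0 : ℝ) < n := by exact_mod_cast (show 0 < n by omega)
    have h5 : (r : ℝ) * (r + (2 : ℕ)) / n ≤ 1 / 2 := by
      rw [div_le_iff₀ hn0]
      have : ((2 * r * (r + 2) + r + 2 : ℕ) : ℝ) ≤ n := by exact_mod_cast hn
      push_cast at this ⊢
      have : (0 : ℝ) ≤ r := by positivity
      linarith
    have hnr : (0 : ℝ) < (n : ℝ) ^ r := by positivity
    have h6 : (n : ℝ) ^ r * (1 / 2) ≤ (n - 2).descFactorial r :=
      le_trans (mul_le_mul_of_nonneg_left (by linarith) hnr.le) h4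
    have hxn : 0 ≤ x n := by simp only [hx]; positivity
    by_contra hc
    push Not at hc
    nlinarith
  refine exists_limit x (fun n => by positivity) hle2 ?_
  intro η hη hη1
  obtain ⟨M, hM⟩ := sampling r hr η hη hη1
  refine ⟨max M (r + 2), fun m hm => ?_⟩
  obtain ⟨N0, hN0⟩ := hM m (le_of_max_le_left hm)
  have hm2 : r + 2 ≤ m := le_of_max_le_right hm
  filter_upwards [eventually_ge_atTop N0, eventually_ge_atTop (r + 2), hle2] with n hn hn2 hn3
  obtain ⟨E, hE, hfree, hd⟩ := exDeg_spec (r + 2) n VF EF hEF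
  have h1 : x n * ((n - 2).choose r : ℝ) ≤ minDeg 2 univ E := by
    rw [hx, ← hd]
    simp only
    rw [div_mul_cancel₀ _ (hpos n hn2).ne']
  obtain ⟨A, hA, hA'⟩ := hN0 n hn E hE (x n) hn3 (tup_of_minDeg E hE (x n) h1)
  have hn0 : (0 : ℝ) < n := by exact_mod_cast (show 0 < n by omega)
  have hne : A.Nonempty := by
    rw [← card_pos]
    have : (0 : ℝ) < A.card := lt_of_lt_of_le (by positivity) hA
    exact_mod_cast this
  obtain ⟨f, hf⟩ := hne
  obtain ⟨hinj, hdeg⟩ := hA' f hf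
  have h2 := minDeg_of_tup (by omega) (pull (r + 2) f E) (pull_card f E) _ hdeg
  have h3 := le_exDeg (r + 2) m VF EF (pull (r + 2) f E) (pull_card f E)
    (fun h => hfree (pull_free f hinj E VF EF h))
  have h4 : (x n - η) * ((m - 2).choose r : ℝ) ≤ (exDeg (r + 2) 2 m VF EF : ℝ) :=
    h2.trans (by exact_mod_cast h3)
  have h5 : x n - η ≤ x m := by
    simp only [hx] at h4 ⊢
    rw [le_div_iff₀ (hpos m hm2)]
    exact h4
  linarith

/-! ### Blow-ups -/

/-- The power mean inequality, in unnormalized form. -/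
theorem jensen_pow {I : Type*} [Fintype I] [Nonempty I] (f : I → ℝ) (hf : ∀ i, 0 ≤ f i) (p : ℕ) :
    Fintype.card I * ((∑ i, f i) / Fintype.card I) ^ p ≤ ∑ i, f i ^ p := by
  have hI : (0 : ℝ) < Fintype.card I := by exact_mod_cast Fintype.card_pos
  have h := Real.pow_arith_mean_le_arith_mean_pow univ (fun _ : I => (Fintype.card I : ℝ)⁻¹) f
    (fun _ _ => by positivity) (by simp) (fun i _ => hf i) p
  rw [← mul_sum, ← mul_sum] at h
  rw [div_eq_inv_mul]
  calc _ ≤ (Fintype.card I : ℝ) * ((Fintype.card I : ℝ)⁻¹ * ∑ i, f i ^ p) := by gcongr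
    _ = _ := by field_simp

/-- Counting blow-ups: the number of `t`-fold boxes, weighted by the product of `φ` over the
transversals of the box, is at least what it would be for constant `φ` of the same average. -/
theorem box_count {V : Type*} [Fintype V] [Nonempty V] (t : ℕ) :
    ∀ (m : ℕ) (φ : (Fin m → V) → ℝ), (∀ w, 0 ≤ φ w) →
    (Fintype.card V : ℝ) ^ (t * m) * ((∑ w, φ w) / (Fintype.card V : ℝ) ^ m) ^ (t ^ m)
      ≤ ∑ x : Fin m → Fin t → V, ∏ s : Fin m → Fin t, φ fun i => x i (s i) := by
  intro m
  induction m with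
  | zero =>
    intro φ _
    simp only [Fintype.sum_unique, Fintype.prod_unique]
    simp
    exact le_of_eq (congrArg φ (Subsingleton.elim _ _))
  | succ m ih =>
    intro φ hφ
    classical
    set n : ℝ := ((Fintype.card V : ℕ) : ℝ) with hn
    have hn0 : 0 < n := by rw [hn]; exact_mod_cast Fintype.card_pos
    have hsum : ∑ w, φ w = ∑ v, ∑ w : Fin m → V, φ (Fin.cons v w) := by
      rw [← Fintype.sum_prod_type']
      exact (Fintype.sum_equiv (Fin.consEquiv fun _ : Fin (m + 1) => V) _ _ fun q => rfl).symm
    have hbox : ∑ x : Fin (m + 1) → Fin t → V, ∏ s : Fin (m + 1) → Fin t, φ (fun i => x i (s i))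
        = ∑ x : Fin m → Fin t → V,
          (∑ v, ∏ s : Fin m → Fin t, φ (Fin.cons v fun i => x i (s i))) ^ t := by
      rw [← Fintype.sum_equiv (Fin.consEquiv fun _ : Fin (m + 1) => Fin t → V)
        (fun q => ∏ s : Fin (m + 1) → Fin t,
          φ (fun i => (Fin.cons q.1 q.2 : Fin (m + 1) → Fin t → V) i (s i))) _ (fun q => rfl),
        Fintype.sum_prod_type_right]
      refine sum_congr rfl fun x _ => ?_
      rw [Fintype.sum_pow]
      refine sum_congr rfl fun y _ => ?_
      rw [← Fintype.prod_equiv (Fin.consEquiv fun _ : Fin (m + 1) => Fin t)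
        (fun q => φ (fun i => (Fin.cons y x : Fin (m + 1) → Fin t → V) i
          ((Fin.cons q.1 q.2 : Fin (m + 1) → Fin t) i))) _ (fun q => rfl),
        Fintype.prod_prod_type]
      refine prod_congr rfl fun a _ => prod_congr rfl fun s _ => ?_
      congr 1
      funext i
      refine Fin.cases ?_ (fun i => ?_) i <;> simp
    rw [hbox]
    have h1 := jensen_pow (fun x : Fin m → Fin t → V =>
      ∑ v, ∏ s : Fin m → Fin t, φ (Fin.cons v fun i => x i (s i)))
      (fun x => sum_nonneg fun v _ => prod_nonneg fun s _ => hφ _) t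
    refine le_trans ?_ h1
    have hc : ((Fintype.card (Fin m → Fin t → V) : ℕ) : ℝ) = n ^ (t * m) := by
      rw [Fintype.card_fun, Fintype.card_fun, Fintype.card_fin, Fintype.card_fin, ← pow_mul, hn]
      push_cast; rfl
    rw [hc, sum_comm]
    have h2 := sum_le_sum fun v (_ : v ∈ (univ : Finset V)) =>
      ih (fun w => φ (Fin.cons v w)) (fun w => hφ _)
    rw [← mul_sum] at h2
    have h3 := jensen_pow (fun v => (∑ w : Fin m → V, φ (Fin.cons v w)) / n ^ m)
      (fun v => div_nonneg (sum_nonneg fun w _ => hφ _) (by positivity)) (t ^ m)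
    rw [← sum_div, ← hsum, ← hn, div_div, ← pow_succ] at h3
    have hS : 0 ≤ (∑ w, φ w) / n ^ (m + 1) :=
      div_nonneg (sum_nonneg fun w _ => hφ _) (by positivity)
    calc n ^ (t * (m + 1)) * ((∑ w, φ w) / n ^ (m + 1)) ^ t ^ (m + 1)
        = n ^ (t * m) * ((n ^ (t * m) * (n * ((∑ w, φ w) / n ^ (m + 1)) ^ t ^ m))
            / n ^ (t * m)) ^ t := by
          rw [mul_div_cancel_left₀ _ (by positivity), mul_pow, ← pow_mul, ← pow_succ,
            ← mul_assoc, ← pow_add]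
          rfl
      _ ≤ _ := by
          gcongr
          refine le_trans ?_ h2
          gcongr

open scoped Classical in
/-- A set of `m`-tuples of positive density in a large vertex set contains all transversals of
a box with `m` disjoint sides of size `t`. -/
theorem exists_box (m t : ℕ) (δ : ℝ) (hδ : 0 < δ) : ∃ N0 : ℕ, ∀ n ≥ N0,
    ∀ A : Finset (Fin m → Fin n), δ * (n : ℝ) ^ m ≤ A.card →
    ∃ x : Fin m → Fin t → Fin n, (∀ i a i' a', x i a = x i' a' → i = i' ∧ a = a') ∧
      ∀ s : Fin m → Fin t, (fun i => x i (s i)) ∈ A := by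
  obtain ⟨N1, hN1⟩ := exists_nat_gt (((m * t : ℕ) : ℝ) ^ 2 / δ ^ (t ^ m) + 1)
  refine ⟨N1, fun n hn A hA => ?_⟩
  have hδp : 0 < δ ^ (t ^ m) := by positivity
  have hnr : ((m * t : ℕ) : ℝ) ^ 2 / δ ^ (t ^ m) + 1 < n :=
    hN1.trans_le (by exact_mod_cast hn)
  have hn0 : (0 : ℝ) < n := lt_of_le_of_lt (by positivity) hnr
  have hn' : 0 < n := by exact_mod_cast hn0
  have : Nonempty (Fin n) := ⟨⟨0, hn'⟩⟩
  have h1 := box_count t m (fun w : Fin m → Fin n => if w ∈ A then (1 : ℝ) else 0)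
    (fun w => by split_ifs <;> norm_num)
  have h2 : ∑ w : Fin m → Fin n, (if w ∈ A then (1 : ℝ) else 0) = A.card := by simp
  set B := univ.filter fun x : Fin m → Fin t → Fin n => ∀ s : Fin m → Fin t, (fun i => x i (s i)) ∈ A
  have h3 : ∑ x : Fin m → Fin t → Fin n, ∏ s : Fin m → Fin t,
      (if (fun i => x i (s i)) ∈ A then (1 : ℝ) else 0) = B.card := by
    simp only [B, card_filter, prod_boole]
    push_cast
    simp
  rw [h2, h3, Fintype.card_fin] at h1
  have h4 : (n : ℝ) ^ (t * m) * δ ^ t ^ m ≤ B.card := by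
    refine le_trans ?_ h1
    gcongr
    rw [le_div_iff₀ (by positivity)]
    exact hA
  by_contra hcon
  push Not at hcon
  have h5 : B.card ≤ (univ.filter fun f : Fin m × Fin t → Fin n =>
      ¬ Function.Injective f).card := by
    refine card_le_card_of_injOn (fun x q => x q.1 q.2) ?_ ?_
    · intro x hx
      rw [mem_coe, mem_filter] at hx ⊢
      refine ⟨mem_univ _, fun hinj => ?_⟩
      obtain ⟨s, hs⟩ := hcon x (fun i a i' a' h => by
        have := @hinj (i, a) (i', a') h
        simpa using this)
      exact hs (hx.2 s)
    · intro x _ x' _ h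
      funext i a
      exact congrFun h (i, a)
  have h6 := card_not_injective (I := Fin m × Fin t) n hn'
  have h7 : ((B.card : ℕ) : ℝ) ≤ ((m * t : ℕ) : ℝ) ^ 2 / n * (n : ℝ) ^ (t * m) := by
    refine (Nat.cast_le.mpr h5).trans (le_trans (le_of_eq ?_) (h6.trans (le_of_eq ?_)))
    · congr!
    · rw [Fintype.card_prod, Fintype.card_fin, Fintype.card_fin, mul_comm t m]
  have h8 : ((m * t : ℕ) : ℝ) ^ 2 / n < δ ^ t ^ m := by
    rw [div_lt_iff₀ hn0]
    have : ((m * t : ℕ) : ℝ) ^ 2 / δ ^ (t ^ m) < n := by linarith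
    rw [div_lt_iff₀ hδp] at this
    linarith
  have h9 : (0 : ℝ) < (n : ℝ) ^ (t * m) := by positivity
  nlinarith

/-- A hypergraph `F` which maps homomorphically into every `m`-vertex `r + 2`-graph whose
pairs all have relative degree at least `c` has pair-degree density at most `2 * c`. -/
theorem upper_bound [DecidableEq α] (r : ℕ) (hr : 1 ≤ r) (VF : Finset α)
    (EF : Finset (Finset α)) (hEF : ∀ e ∈ EF, e ⊆ VF ∧ e.card = r + 2) (c : ℝ) (hc : 0 < c)
    (hc1 : c ≤ 1) (M0 : ℕ)
    (hhom : ∀ m ≥ M0, ∀ E : Finset (Finset (Fin m)), (∀ e ∈ E, e.card = r + 2) →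
      (∀ i j, i ≠ j → c * (m - 2).descFactorial r ≤ tup r E i j) →
      ∃ h : α → Fin m, ∀ e ∈ EF, e.image h ∈ E) :
    ∃ N0 : ℕ, ∀ n ≥ N0, ∀ E : Finset (Finset (Fin n)), (∀ e ∈ E, e.card = r + 2) →
      2 * c * ((n - 2).choose r : ℝ) ≤ minDeg 2 univ E → ContainsCopy VF EF univ E := by
  classical
  obtain ⟨M, hM⟩ := sampling r hr c hc (by linarith)
  set m := max M M0 with hm
  obtain ⟨N0, hN0⟩ := hM m (le_max_left _ _)
  set K : ℝ := ((Fintype.card (Finset (Finset (Fin m))) : ℕ) : ℝ) with hK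
  have hK0 : 0 < K := by rw [hK]; exact_mod_cast Fintype.card_pos
  obtain ⟨N1, hN1⟩ := exists_box m VF.card (1 / (2 * K)) (by positivity)
  refine ⟨max (max N0 N1) 1, fun n hn' E hE hdeg => ?_⟩
  have hn : max N0 N1 ≤ n := le_of_max_le_left hn'
  have hn1 : 0 < n := le_of_max_le_right hn'
  have hnr : (0 : ℝ) < n := by exact_mod_cast hn1
  obtain ⟨A, hA, hA'⟩ := hN0 n (le_of_max_le_left hn) E hE (2 * c) (by linarith)
    (tup_of_minDeg E hE _ hdeg)
  -- many of the sampled tuples induce the same graph on `Fin m`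
  obtain ⟨E', -, hE'⟩ : ∃ E' ∈ (univ : Finset (Finset (Finset (Fin m)))),
      1 / (2 * K) * (n : ℝ) ^ m ≤ ((A.filter fun f => pull (r + 2) f E = E').card : ℝ) := by
    refine exists_le_of_sum_le univ_nonempty ?_
    have h1 := card_eq_sum_card_fiberwise (f := fun f : Fin m → Fin n => pull (r + 2) f E)
      (s := A) (t := univ) (by intro x _; simp)
    rw [sum_const, nsmul_eq_mul, card_univ, ← hK]
    rw [h1] at hA
    push_cast at hA
    refine le_trans (le_of_eq ?_) hA
    field_simp
  obtain ⟨x, hx, hxA⟩ := hN1 n (le_of_max_le_right hn) _ hE'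
  obtain ⟨h, hh⟩ : ∃ h : α → Fin m, ∀ e ∈ EF, e.image h ∈ E' := by
    obtain ⟨f, hf⟩ : (A.filter fun f => pull (r + 2) f E = E').Nonempty := by
      rw [← card_pos]
      have : (0 : ℝ) < ((A.filter fun f => pull (r + 2) f E = E').card : ℝ) :=
        lt_of_lt_of_le (by positivity) hE'
      exact_mod_cast this
    obtain ⟨hfA, rfl⟩ := mem_filter.mp hf
    refine hhom m (le_max_right _ _) _ (pull_card f E) fun i j hij => ?_
    have := (hA' f hfA).2 i j hij
    have h2 : 2 * c - c = c := by ring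
    rwa [h2] at this
  have hE'card : ∀ e ∈ EF, (e.image h).card = r + 2 := by
    intro e he
    obtain ⟨v, hv⟩ : e.Nonempty := by rw [← card_pos, (hEF e he).2]; omega
    have := (mem_filter.mp (hxA fun _ => VF.equivFin ⟨v, (hEF e he).1 hv⟩)).2
    exact pull_card _ E _ (this ▸ hh e he)
  let g : α → Fin n := fun v =>
    if hv : v ∈ VF then x (h v) (VF.equivFin ⟨v, hv⟩) else ⟨0, hn1⟩
  refine ⟨g, ?_, fun _ _ => mem_univ _, ?_⟩
  · intro v hv w hw hvw
    rw [mem_coe] at hv hw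
    simp only [g, dif_pos hv, dif_pos hw] at hvw
    have := VF.equivFin.injective (hx _ _ _ _ hvw).2
    exact congrArg Subtype.val this
  · intro e he
    have hinj : Set.InjOn h e := card_image_iff.mp ((hE'card e he).trans (hEF e he).2.symm)
    obtain ⟨v0, hv0⟩ : e.Nonempty := by rw [← card_pos, (hEF e he).2]; omega
    let s : Fin m → Fin VF.card := fun i =>
      if hi : ∃ v ∈ e, h v = i then
        VF.equivFin ⟨hi.choose, (hEF e he).1 hi.choose_spec.1⟩
      else VF.equivFin ⟨v0, (hEF e he).1 hv0⟩
    have hs : ∀ v (hv : v ∈ e), s (h v) = VF.equivFin ⟨v, (hEF e he).1 hv⟩ := by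
      intro v hv
      have hex : ∃ w ∈ e, h w = h v := ⟨v, hv, rfl⟩
      simp only [s, dif_pos hex]
      congr 2
      exact hinj hex.choose_spec.1 hv hex.choose_spec.2
    have h1 := (mem_filter.mp (hxA s)).2
    have h2 := hh e he
    rw [← h1] at h2
    have h3 := (mem_filter.mp h2).2.2
    rw [image_image] at h3
    convert h3 using 1
    refine image_congr fun v hv => ?_
    simp only [g, dif_pos ((hEF e he).1 hv), Function.comp, hs v hv]

/-! ### Eventually periodic walks of pairs -/

open scoped Classical in
/-- In a digraph with minimum out-degree at least `δ |P|`, a bounded number of vertices receives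
an arc from all but a `(1 - δ) ^ h` proportion of the vertices. -/
theorem greedy_hit {P : Type*} [Fintype P] (R : P → P → Prop) (δ : ℝ)
    (hδ1 : δ ≤ 1) (hR : ∀ p, δ * Fintype.card P ≤ (univ.filter fun q => R p q).card) (h : ℕ) :
    ∃ Q : Finset P, Q.card ≤ h ∧ ((univ.filter fun v => ∀ z ∈ Q, ¬ R v z).card : ℝ)
      ≤ (1 - δ) ^ h * Fintype.card P := by
  induction h with
  | zero =>
    refine ⟨∅, by simp, ?_⟩
    rw [pow_zero, one_mul, Nat.cast_le]
    exact card_le_univ _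
  | succ h ih =>
    obtain ⟨Q, hQ, hU⟩ := ih
    set U := univ.filter fun v => ∀ z ∈ Q, ¬ R v z with hUdef
    rcases isEmpty_or_nonempty P with hP | hP
    · refine ⟨∅, by simp, ?_⟩
      simp [Fintype.card_eq_zero]
    have hsum : ∑ z : P, ((U.filter fun v => R v z).card : ℝ)
        = ∑ v ∈ U, ((univ.filter fun q => R v q).card : ℝ) := by
      simp only [card_filter]
      push_cast
      exact sum_comm
    have hlow : δ * Fintype.card P * U.card ≤ ∑ z : P, ((U.filter fun v => R v z).card : ℝ) := by
      rw [hsum, mul_comm, ← nsmul_eq_mul]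
      exact card_nsmul_le_sum _ _ _ fun v _ => hR v
    obtain ⟨z, -, hz⟩ : ∃ z ∈ (univ : Finset P),
        δ * U.card ≤ ((U.filter fun v => R v z).card : ℝ) := by
      refine exists_le_of_sum_le univ_nonempty ?_
      rw [sum_const, nsmul_eq_mul, card_univ]
      linarith
    refine ⟨insert z Q, (card_insert_le _ _).trans (by omega), ?_⟩
    have h1 : (univ.filter fun v => ∀ z' ∈ insert z Q, ¬ R v z') = U.filter fun v => ¬ R v z := by
      ext v
      simp only [hUdef, mem_filter, mem_univ, true_and, mem_insert, forall_eq_or_imp]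
      tauto
    have h2 := card_filter_add_card_filter_not (s := U) (fun v => R v z)
    have h3 : ((U.filter fun v => R v z).card : ℝ) + ((U.filter fun v => ¬ R v z).card : ℝ)
        = U.card := by exact_mod_cast h2
    rw [h1, pow_succ]
    have : (1 - δ) * (U.card : ℝ) ≤ (1 - δ) * ((1 - δ) ^ h * Fintype.card P) :=
      mul_le_mul_of_nonneg_left hU (by linarith)
    linarith

open scoped Classical in
/-- In a digraph with minimum out-degree at least `δ |P|`, from every vertex there is a walk
which becomes periodic, where both the start `t` of the period and its length `ℓ` depend only
on `δ`. -/
theorem periodic_walks (δ : ℝ) (hδ : 0 < δ) (hδ1 : δ ≤ 1) : ∃ t ℓ : ℕ, 1 ≤ t ∧ 2 ≤ ℓ ∧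
    ∀ {P : Type} [Fintype P] (R : P → P → Prop),
      (∀ p, δ * Fintype.card P ≤ (univ.filter fun q => R p q).card) →
      ∀ p, ∃ ω : ℕ → P, ω 0 = p ∧ (∀ s, R (ω s) (ω (s + 1))) ∧ ω (t + ℓ) = ω t := by
  obtain ⟨h, hh⟩ := exists_pow_lt_of_lt_one hδ (show 1 - δ < 1 by linarith)
  refine ⟨2 * (h + 1), 2 * h.factorial, by omega, ?_, ?_⟩
  · have := Nat.factorial_pos h; omega
  intro P _ R hR p
  obtain ⟨Q, hQ, hU⟩ := greedy_hit R δ hδ1 hR h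
  have hP : (0 : ℝ) < Fintype.card P := by exact_mod_cast Fintype.card_pos_iff.mpr ⟨p⟩
  have hstep : ∀ v : P, ∃ q z, R v q ∧ R q z ∧ z ∈ Q := by
    intro v
    by_contra hcon
    push Not at hcon
    have hsub : (univ.filter fun q => R v q) ⊆ univ.filter fun v => ∀ z ∈ Q, ¬ R v z := by
      intro q hq
      refine mem_filter.mpr ⟨mem_univ _, fun z hz hqz => ?_⟩
      exact hcon q z (mem_filter.mp hq).2 hqz hz
    have h1 : ((univ.filter fun q => R v q).card : ℝ)
        ≤ (univ.filter fun v => ∀ z ∈ Q, ¬ R v z).card := by exact_mod_cast card_le_card hsub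
    have h2 := hR v
    nlinarith
  choose q z hq hz hzQ using hstep
  -- the first `h + 1` iterates of `z` lie in `Q`, so two of them coincide
  have hper : z^[h.factorial] (z^[h + 1] p) = z^[h + 1] p := by
    obtain ⟨a, ha, b, hb, hab, heq⟩ := exists_ne_map_eq_of_card_lt_of_maps_to
      (s := range (h + 1)) (t := Q) (f := fun i => z^[i + 1] p) (by simpa using by omega)
      (fun i _ => by
        simp only [Function.iterate_succ_apply']
        exact hzQ _)
    wlog hlt : a < b generalizing a b
    · exact this b hb a ha hab.symm heq.symm (by omega)
    simp only [mem_range] at ha hb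
    have h1 : Function.IsPeriodicPt z (b - a) (z^[a + 1] p) := by
      unfold Function.IsPeriodicPt Function.IsFixedPt
      rw [← Function.iterate_add_apply, heq]
      have : b - a + (a + 1) = b + 1 := by omega
      rw [this]
    have h2 : Function.IsPeriodicPt z (b - a) (z^[h + 1] p) := by
      have h3 := h1.apply_iterate (h - a)
      rw [← Function.iterate_add_apply] at h3
      have : h - a + (a + 1) = h + 1 := by omega
      rwa [this] at h3
    exact h2.trans_dvd (Nat.dvd_factorial (by omega) (by omega))
  refine ⟨fun s => if s % 2 = 0 then z^[s / 2] p else q (z^[s / 2] p), by simp, ?_, ?_⟩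
  · intro s
    rcases Nat.mod_two_eq_zero_or_one s with hs | hs
    · have h1 : (s + 1) % 2 = 1 := by omega
      have h2 : (s + 1) / 2 = s / 2 := by omega
      simp only [hs, h1, h2, if_true, one_ne_zero, if_false]
      exact hq _
    · have h1 : (s + 1) % 2 = 0 := by omega
      have h2 : (s + 1) / 2 = s / 2 + 1 := by omega
      simp only [hs, h1, h2, if_true, one_ne_zero, if_false, Function.iterate_succ_apply']
      exact hz _
  · have h1 : (2 * (h + 1) + 2 * h.factorial) % 2 = 0 := by omega
    have h2 : (2 * (h + 1) + 2 * h.factorial) / 2 = h.factorial + (h + 1) := by omega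
    have h3 : (2 * (h + 1)) % 2 = 0 := by omega
    have h4 : (2 * (h + 1)) / 2 = h + 1 := by omega
    simp only [h1, h2, h3, h4, if_true]
    rw [Function.iterate_add_apply]
    exact hper

open scoped Classical in
/-- In a dense enough `r + 3`-graph, say that a pair `p` is joined to a pair `q` if a common
`r`-tuple completes `p` to an edge with either vertex of `q`. Each pair is joined to a positive
proportion of all pairs, so `periodic_walks` applies and its constants depend only on `c`. -/
theorem pair_walks (r : ℕ) (c : ℝ) (hc : 0 < c) (hc1 : c ≤ 1) : ∃ t ℓ M : ℕ, 1 ≤ t ∧ 2 ≤ ℓ ∧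
    ∀ m ≥ M, ∀ E : Finset (Finset (Fin m)),
      (∀ i j, i ≠ j → c * (m - 2).descFactorial (r + 1) ≤ tup (r + 1) E i j) →
      ∀ i j, i ≠ j → ∃ (p : ℕ → Bool → Fin m) (y : ℕ → Fin r → Fin m),
        p 0 false = i ∧ p 0 true = j ∧ p (t + ℓ) = p t ∧
        ∀ s b, insert (p s false) (insert (p s true) (insert (p (s + 1) b)
          (univ.image (y s)))) ∈ E := by
  obtain ⟨t, ℓ, ht, hℓ, hw⟩ := periodic_walks (c ^ 2 / 8) (by positivity) (by nlinarith)
  obtain ⟨M, hM⟩ := exists_nat_ge (4 / c + 2 * (r + 1) * (r + 1 + 2) + 1)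
  refine ⟨t, ℓ, M, ht, hℓ, fun m hm E hE => ?_⟩
  have hmr : 4 / c + 2 * ((r : ℝ) + 1) * (r + 1 + 2) + 1 ≤ m := hM.trans (by exact_mod_cast hm)
  have h4c : 0 < 4 / c := by positivity
  have hrr : 0 ≤ 2 * ((r : ℝ) + 1) * (r + 1 + 2) := by positivity
  have hm0 : (0 : ℝ) < m := by linarith
  have hm0' : 0 < m := by exact_mod_cast hm0
  have hcm : 4 ≤ c * m := by
    have : 4 / c ≤ m := by linarith
    rwa [div_le_iff₀ hc, mul_comm] at this
  let R : {p : Fin m × Fin m // p.1 ≠ p.2} → {p : Fin m × Fin m // p.1 ≠ p.2} → Prop :=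
    fun p q => ∃ y : Fin r → Fin m,
      insert p.1.1 (insert p.1.2 (insert q.1.1 (univ.image y))) ∈ E ∧
      insert p.1.1 (insert p.1.2 (insert q.1.2 (univ.image y))) ∈ E
  -- some `r`-tuple `y` completes `{u, v}` to an edge with at least `c m / 2` vertices, and `{u, v}`
  -- is joined to every pair of such vertices
  have hR : ∀ p, c ^ 2 / 8 * Fintype.card {p : Fin m × Fin m // p.1 ≠ p.2}
      ≤ (univ.filter fun q => R p q).card := by
    rintro ⟨⟨u, v⟩, huv⟩
    have h1 : c / 2 * (m : ℝ) ^ (r + 1) ≤ tup (r + 1) E u v := by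
      refine le_trans ?_ (hE u v huv)
      have h2 := desc_lower m 2 (r + 1) hm0'
      have h3 : ((r + 1 : ℕ) : ℝ) * ((r + 1 : ℕ) + (2 : ℕ)) / m ≤ 1 / 2 := by
        rw [div_le_iff₀ hm0]
        push_cast
        linarith
      have h4 : (m : ℝ) ^ (r + 1) * (1 / 2) ≤ (m - 2).descFactorial (r + 1) :=
        le_trans (mul_le_mul_of_nonneg_left (by linarith) (by positivity)) h2
      nlinarith
    let X : (Fin r → Fin m) → Finset (Fin m) := fun y =>
      univ.filter fun x => insert u (insert v (insert x (univ.image y))) ∈ E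
    have h5 : ((tup (r + 1) E u v : ℕ) : ℝ) = ∑ y : Fin r → Fin m, ((X y).card : ℝ) := by
      simp only [tup, X, card_filter]
      push_cast
      rw [← Fintype.sum_prod_type_right']
      refine (Fintype.sum_equiv (Fin.consEquiv fun _ : Fin (r + 1) => Fin m) _ _
        fun q => ?_).symm
      have : univ.image (Fin.consEquiv (fun _ : Fin (r + 1) => Fin m) q)
          = insert q.1 (univ.image q.2) := by
        ext x
        simp [Fin.exists_fin_succ, eq_comm]
      rw [this]
    have : Nonempty (Fin m) := ⟨⟨0, hm0'⟩⟩
    obtain ⟨y, -, hy⟩ : ∃ y ∈ (univ : Finset (Fin r → Fin m)), c / 2 * m ≤ ((X y).card : ℝ) := by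
      refine exists_le_of_sum_le univ_nonempty ?_
      rw [sum_const, nsmul_eq_mul, card_univ, Fintype.card_fun, Fintype.card_fin,
        Fintype.card_fin, ← h5]
      push_cast
      refine le_trans (le_of_eq ?_) h1
      ring
    have h6 : (X y).offDiag.card ≤ (univ.filter fun q => R ⟨(u, v), huv⟩ q).card := by
      refine card_le_card_of_surjOn (fun q => q.1) ?_
      intro q hq
      rw [mem_coe, mem_offDiag] at hq
      refine ⟨⟨q, hq.2.2⟩, ?_, rfl⟩
      rw [mem_coe, mem_filter]
      exact ⟨mem_univ _, y, (mem_filter.mp hq.1).2, (mem_filter.mp hq.2.1).2⟩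
    have h7 : (((X y).offDiag.card : ℕ) : ℝ) = (X y).card * ((X y).card - 1) := by
      rw [offDiag_card, Nat.cast_sub (Nat.le_mul_self _)]
      push_cast; ring
    have h8 : ((Fintype.card {p : Fin m × Fin m // p.1 ≠ p.2} : ℕ) : ℝ) ≤ (m : ℝ) ^ 2 := by
      have := Fintype.card_subtype_le fun p : Fin m × Fin m => p.1 ≠ p.2
      rw [Fintype.card_prod, Fintype.card_fin, ← sq] at this
      exact_mod_cast this
    calc c ^ 2 / 8 * ((Fintype.card {p : Fin m × Fin m // p.1 ≠ p.2} : ℕ) : ℝ)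
        ≤ c ^ 2 / 8 * (m : ℝ) ^ 2 := by gcongr
      _ = (c / 2 * m) * (c / 4 * m) := by ring
      _ ≤ (X y).card * ((X y).card - 1) := by
          gcongr
          linarith
      _ ≤ _ := by rw [← h7]; exact_mod_cast h6
  intro i j hij
  obtain ⟨ω, h0, hs, hper⟩ := hw R (fun p => by convert hR p) ⟨(i, j), hij⟩
  choose y hy1 hy2 using hs
  refine ⟨fun s b => if b then (ω s).1.2 else (ω s).1.1, y, by simp [h0], by simp [h0], ?_, ?_⟩
  · funext b
    simp only [hper]
  · intro s b
    cases b
    · simpa using hy1 s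
    · simpa using hy2 s

/-! ### The hypergraph of walks -/

/-- The vertices from which the hypergraphs `walkEdges` are built. The vertices `Sum.inl i` are
shared by all gadgets. The gadget of the pair `(i, j)` has at step `s` the pair vertices
`Sum.inr (i, j, s, Sum.inl b)` and `r` connecting vertices `Sum.inr (i, j, s, Sum.inr c)`. -/
abbrev WVert (r : ℕ) := ℕ ⊕ (ℕ × ℕ × ℕ × (Bool ⊕ Fin r))

instance (r : ℕ) : DecidableEq (WVert r) := inferInstance

/-- The two vertices, indexed by `b`, of the pair at step `s` of the gadget of `(i, j)`. Step `0`
is the pair `i, j` itself, and step `t + ℓ` is identified with step `t`. -/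
def stepVert (r t ℓ i j s : ℕ) (b : Bool) : WVert r :=
  if s = 0 then Sum.inl (if b then j else i)
  else if s = t + ℓ then Sum.inr (i, j, t, Sum.inl b)
  else Sum.inr (i, j, s, Sum.inl b)

/-- The edge consisting of the pair at step `s`, the connecting vertices at step `s`, and one of
the two vertices of the pair at step `s + 1`. -/
def walkEdge (r t ℓ i j s : ℕ) (b : Bool) : Finset (WVert r) :=
  insert (stepVert r t ℓ i j s false) (insert (stepVert r t ℓ i j s true)
    (insert (stepVert r t ℓ i j (s + 1) b)
      (univ.image fun c : Fin r => (Sum.inr (i, j, s, Sum.inr c) : WVert r))))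

/-- The hypergraph formed by an eventually periodic walk of pairs, with preperiod `t` and period
`ℓ`, started at every pair of the first `T` vertices. -/
def walkEdges (r t ℓ T : ℕ) : Finset (Finset (WVert r)) :=
  ((range T ×ˢ range T ×ˢ range (t + ℓ) ×ˢ (univ : Finset Bool)).filter
    fun q => q.1 < q.2.1).image fun q => walkEdge r t ℓ q.1 q.2.1 q.2.2.1 q.2.2.2

theorem mem_walkEdges {r t ℓ T : ℕ} {e : Finset (WVert r)} :
    e ∈ walkEdges r t ℓ T ↔ ∃ i j s b, i < j ∧ j < T ∧ s < t + ℓ ∧ walkEdge r t ℓ i j s b = e := by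
  simp only [walkEdges, mem_image, mem_filter, mem_product, mem_range, mem_univ, and_true,
    Prod.exists]
  constructor
  · rintro ⟨i, j, s, b, ⟨⟨-, hj, hs⟩, hij⟩, rfl⟩
    exact ⟨i, j, s, b, hij, hj, hs, rfl⟩
  · rintro ⟨i, j, s, b, hij, hj, hs, rfl⟩
    exact ⟨i, j, s, b, ⟨⟨by omega, hj, hs⟩, hij⟩, rfl⟩

theorem card_walkEdge {r t ℓ i j s : ℕ} (hℓ : 2 ≤ ℓ) (hij : i < j)
    (hs : s < t + ℓ) (b : Bool) : (walkEdge r t ℓ i j s b).card = r + 3 := by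
  have h0 : (univ.image fun c : Fin r => (Sum.inr (i, j, s, Sum.inr c) : WVert r)).card = r := by
    rw [card_image_of_injective _ fun a b h => by simpa using h]
    simp
  unfold walkEdge
  rw [card_insert_of_notMem, card_insert_of_notMem, card_insert_of_notMem, h0]
  · unfold stepVert
    split_ifs <;> simp
  · simp only [mem_insert, mem_image, mem_univ, true_and, not_or]
    constructor
    · unfold stepVert
      split_ifs <;> simp <;> omega
    · unfold stepVert
      split_ifs <;> simp
  · simp only [mem_insert, mem_image, mem_univ, true_and, not_or]
    refine ⟨?_, ?_, ?_⟩
    · unfold stepVert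
      split_ifs <;> simp_all
      omega
    · unfold stepVert
      split_ifs <;> simp <;> omega
    · unfold stepVert
      split_ifs <;> simp

/-- If every pair of vertices starts a walk with preperiod `t` and period `ℓ`, then the walks glue
to a homomorphism from `walkEdges`. -/
theorem walk_hom (r t ℓ T m : ℕ) (hm : T ≤ m) (hm0 : 0 < m)
    (E : Finset (Finset (Fin m)))
    (hE : ∀ i j : Fin m, i ≠ j → ∃ (p : ℕ → Bool → Fin m) (y : ℕ → Fin r → Fin m),
        p 0 false = i ∧ p 0 true = j ∧ p (t + ℓ) = p t ∧
        ∀ s b, insert (p s false) (insert (p s true) (insert (p (s + 1) b)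
          (univ.image (y s)))) ∈ E) :
    ∃ h : WVert r → Fin m, ∀ e ∈ walkEdges r t ℓ T, e.image h ∈ E := by
  let ι : ℕ → Fin m := fun i => if hi : i < m then ⟨i, hi⟩ else ⟨0, hm0⟩
  have hex : ∀ i j : ℕ, ∃ (p : ℕ → Bool → Fin m) (y : ℕ → Fin r → Fin m), i < j → j < m →
        p 0 false = ι i ∧ p 0 true = ι j ∧ p (t + ℓ) = p t ∧
        ∀ s b, insert (p s false) (insert (p s true) (insert (p (s + 1) b)
          (univ.image (y s)))) ∈ E := by
    intro i j
    by_cases hij : i < j ∧ j < m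
    · obtain ⟨p, y, h⟩ := hE (ι i) (ι j) (by
        simp only [ι, dif_pos hij.2, dif_pos (hij.1.trans hij.2), ne_eq, Fin.mk.injEq]
        omega)
      exact ⟨p, y, fun _ _ => h⟩
    · exact ⟨fun _ _ => ⟨0, hm0⟩, fun _ _ => ⟨0, hm0⟩, fun h1 h2 => absurd ⟨h1, h2⟩ hij⟩
  choose p y hpy using hex
  let h : WVert r → Fin m := Sum.elim ι fun q =>
    Sum.elim (fun b => p q.1 q.2.1 q.2.2.1 b) (fun c => y q.1 q.2.1 q.2.2.1 c) q.2.2.2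
  refine ⟨h, fun e he => ?_⟩
  obtain ⟨i, j, s, b, hij, hj, hs, rfl⟩ := mem_walkEdges.mp he
  obtain ⟨h0, h1, h2, h3⟩ := hpy i j hij (by omega)
  have hstep : ∀ s b, h (stepVert r t ℓ i j s b) = p i j s b := by
    intro s b
    unfold stepVert
    split_ifs with hs0 hb hst
    · subst hs0; subst hb; exact h1.symm
    · subst hs0; rw [Bool.not_eq_true] at hb; subst hb; exact h0.symm
    · subst hst; rw [h2]; rfl
    · rfl
  have := h3 s b
  unfold walkEdge
  rw [image_insert, image_insert, image_insert, image_image, hstep, hstep, hstep]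
  exact this

/-! ### Shift graphs -/

/-- The `r + 3`-graph on `Fin n` whose edges are the sets `e` such that whenever two vertices
of `e` are congruent to the same `g` modulo `N`, the residues of the remaining vertices of `e`
are exactly `g + 1, …, g + r + 1`. -/
def shiftGraph (r N n : ℕ) : Finset (Finset (Fin n)) :=
  univ.filter fun e => e.card = r + 3 ∧ ∀ u ∈ e, ∀ v ∈ e, u ≠ v →
    ((u : ℕ) : ZMod N) = ((v : ℕ) : ZMod N) →
    ((e.erase u).erase v).image (fun x : Fin n => ((x : ℕ) : ZMod N))
      = univ.image fun x : Fin (r + 1) => ((u : ℕ) : ZMod N) + ((x : ℕ) + 1 : ℕ)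

theorem natCast_injOn {N : ℕ} {a b : ℕ} (ha : a < N) (hb : b < N)
    (h : (a : ZMod N) = (b : ZMod N)) : a = b := by
  rw [ZMod.natCast_eq_natCast_iff] at h
  exact Nat.ModEq.eq_of_lt_of_lt h ha hb

/-- The `r + 1` shifts of a residue are distinct, as the modulus is large. -/
theorem shift_injective {r N : ℕ} (hN : r + 3 ≤ N) (g : ZMod N) :
    Function.Injective fun x : Fin (r + 1) => g + ((x : ℕ) + 1 : ℕ) := by
  intro x y h
  have := natCast_injOn (by omega) (by omega) (add_left_cancel h)
  ext
  omega

/-- If the two vertices of a pair have the same residue, then so do the two vertices of the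
next pair of a walk in `shiftGraph`, and the residue has increased by one of `1, …, r + 1`. -/
theorem shift_step {r N n : ℕ} (hN : r + 3 ≤ N) (u v : Fin n) (w : Bool → Fin n)
    (y : Fin r → Fin n)
    (h : ∀ b, insert u (insert v (insert (w b) (univ.image y))) ∈ shiftGraph r N n)
    (huv : ((u : ℕ) : ZMod N) = ((v : ℕ) : ZMod N)) :
    ((w false : ℕ) : ZMod N) = ((w true : ℕ) : ZMod N) ∧
      ∃ d : ℕ, 1 ≤ d ∧ d ≤ r + 1 ∧ ((w false : ℕ) : ZMod N) = ((u : ℕ) : ZMod N) + d := by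
  set Y := (univ.image y).image fun x : Fin n => ((x : ℕ) : ZMod N) with hY
  have key : ∀ b, insert ((w b : ℕ) : ZMod N) Y
      = univ.image fun x : Fin (r + 1) => ((u : ℕ) : ZMod N) + ((x : ℕ) + 1 : ℕ) := by
    intro b
    obtain ⟨hcard, hcol⟩ := (mem_filter.mp (h b)).2
    have himg : univ.image (Fin.cons (w b) y : Fin (r + 1) → Fin n)
        = insert (w b) (univ.image y) := by
      ext x
      simp [Fin.exists_fin_succ, eq_comm]
    obtain ⟨hne, -, hw⟩ := tuple_edge (r := r + 1) (u := u) (v := v)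
      (w := (Fin.cons (w b) y : Fin (r + 1) → Fin n)) (by rw [himg]; exact hcard)
    have hu : u ∉ insert v (insert (w b) (univ.image y)) := by
      rw [← himg]
      simp only [mem_insert, mem_image, mem_univ, true_and, not_or, not_exists]
      exact ⟨hne, fun i => (hw i).1⟩
    have hv : v ∉ insert (w b) (univ.image y) := by
      rw [← himg]
      simp only [mem_image, mem_univ, true_and, not_exists]
      exact fun i => (hw i).2
    have h1 := hcol u (by simp) v (by simp) hne huv
    rw [erase_insert hu, erase_insert hv, image_insert] at h1
    exact h1
  have hYc : Y.card ≤ r := by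
    refine (card_image_le.trans card_image_le).trans ?_
    simp
  have hnot : ((w false : ℕ) : ZMod N) ∉ Y := by
    intro hmem
    have h1 := congrArg Finset.card (key false)
    rw [insert_eq_of_mem hmem, card_image_of_injective _ (shift_injective hN _)] at h1
    simp at h1
    omega
  refine ⟨(insert_inj hnot).mp ((key false).trans (key true).symm), ?_⟩
  have h2 : ((w false : ℕ) : ZMod N) ∈ insert ((w false : ℕ) : ZMod N) Y := mem_insert_self _ _
  rw [key false, mem_image] at h2
  obtain ⟨x, -, hx⟩ := h2
  exact ⟨x + 1, by omega, by omega, hx.symm⟩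

/-- There is no homomorphism from `walkEdges` on `N + 1` starting vertices to `shiftGraph`: some
starting pair has equal residues, these stay equal along the walk, and going once around the
cycle increases the residue by a total in `[ℓ, (r + 1) ℓ]`, which is nonzero modulo `N`. -/
theorem shift_no_walk {r t ℓ N n : ℕ} (ht : 1 ≤ t) (hℓ : 2 ≤ ℓ) (hN : r + 3 ≤ N)
    (hN2 : (r + 1) * ℓ < N)
    (h : WVert r → Fin n)
    (hh : ∀ e ∈ walkEdges r t ℓ (N + 1), e.image h ∈ shiftGraph r N n) : False := by
  have : NeZero N := ⟨by omega⟩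
  let c : WVert r → ZMod N := fun x => ((h x : ℕ) : ZMod N)
  obtain ⟨i, j, hij, hj, hc⟩ : ∃ i j : ℕ, i < j ∧ j < N + 1 ∧ c (Sum.inl i) = c (Sum.inl j) := by
    obtain ⟨a, ha, b, hb, hab, heq⟩ := exists_ne_map_eq_of_card_lt_of_maps_to
      (s := range (N + 1)) (t := (univ : Finset (ZMod N))) (f := fun i => c (Sum.inl i))
      (by rw [card_univ, ZMod.card, card_range]; omega) (fun i _ => by simp)
    rw [mem_range] at ha hb
    rcases lt_or_gt_of_ne hab with hlt | hlt
    · exact ⟨a, b, hlt, hb, heq⟩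
    · exact ⟨b, a, hlt, ha, heq.symm⟩
  -- residues along the gadget of the pair `(i, j)`
  let C : ℕ → Bool → ZMod N := fun s b => c (stepVert r t ℓ i j s b)
  have hstep : ∀ s, s < t + ℓ → C s false = C s true → C (s + 1) false = C (s + 1) true ∧
      ∃ d : ℕ, 1 ≤ d ∧ d ≤ r + 1 ∧ C (s + 1) false = C s false + d := by
    intro s hs hmono
    refine shift_step hN (h (stepVert r t ℓ i j s false)) (h (stepVert r t ℓ i j s true))
      (fun b => h (stepVert r t ℓ i j (s + 1) b))
      (fun c => h (Sum.inr (i, j, s, Sum.inr c))) (fun b => ?_) hmono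
    have h1 := hh _ (mem_walkEdges.mpr ⟨i, j, s, b, hij, hj, hs, rfl⟩)
    unfold walkEdge at h1
    rw [image_insert, image_insert, image_insert, image_image] at h1
    exact h1
  have hmono : ∀ s, s ≤ t + ℓ → C s false = C s true := by
    intro s
    induction s with
    | zero => intro _; exact hc
    | succ s ih => intro hs; exact (hstep s (by omega) (ih (by omega))).1
  have hshift : ∀ q, q ≤ ℓ → ∃ D : ℕ, q ≤ D ∧ D ≤ (r + 1) * q ∧
      C (t + q) false = C t false + D := by
    intro q
    induction q with
    | zero => intro _; exact ⟨0, by simp, by simp, by simp⟩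
    | succ q ih =>
      intro hq
      obtain ⟨D, hD1, hD2, hD3⟩ := ih (by omega)
      obtain ⟨-, d, hd1, hd2, hd3⟩ := hstep (t + q) (by omega) (hmono _ (by omega))
      refine ⟨D + d, by omega, by rw [mul_add]; omega, ?_⟩
      rw [← add_assoc, hd3, hD3]
      push_cast
      ring
  obtain ⟨D, hD1, hD2, hD3⟩ := hshift ℓ le_rfl
  have hclose : C (t + ℓ) false = C t false := by
    simp only [C]
    congr 1
    unfold stepVert
    rw [if_neg (by omega), if_pos rfl, if_neg (by omega), if_neg (by omega)]
  rw [hclose] at hD3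
  have h0 : ((D : ℕ) : ZMod N) = ((0 : ℕ) : ZMod N) := by
    rw [Nat.cast_zero]
    exact (left_eq_add.mp hD3)
  have := natCast_injOn (by omega) (by omega) h0
  omega

/-- Every residue class modulo `N` contains at least `⌊n / N⌋` of the numbers below `n`. -/
theorem color_class {N n : ℕ} (hN : 0 < N) (a : ZMod N) :
    n / N ≤ (univ.filter fun v : Fin n => ((v : ℕ) : ZMod N) = a).card := by
  have : NeZero N := ⟨by omega⟩
  have hlt : ∀ s : Fin (n / N), (s : ℕ) * N + a.val < n := by
    intro s
    have h1 := a.val_lt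
    have h2 : ((s : ℕ) + 1) * N ≤ n / N * N := Nat.mul_le_mul_right _ s.2
    have h3 := Nat.div_mul_le_self n N
    rw [add_mul] at h2
    omega
  calc n / N = (univ : Finset (Fin (n / N))).card := by simp
    _ ≤ _ := by
      refine card_le_card_of_injOn (fun s => ⟨s * N + a.val, hlt s⟩) ?_ ?_
      · intro s _
        rw [mem_coe, mem_filter]
        simp
      · intro s _ s' _ h
        simp only [Fin.mk.injEq, add_left_inj] at h
        ext
        exact Nat.eq_of_mul_eq_mul_right hN h

/-- Every pair has large degree in `shiftGraph`. Choose `r + 1` distinct residues `κ` avoiding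
those of `u` and `v`, and equal to the prescribed shifts when `u` and `v` have the same residue;
any choice of vertices from these residue classes completes `{u, v}` to an edge. -/
theorem shift_tup {r N n : ℕ} (hN : r + 3 ≤ N) (u v : Fin n) (huv : u ≠ v) :
    (n / N) ^ (r + 1) ≤ tup (r + 1) (shiftGraph r N n) u v := by
  have : NeZero N := ⟨by omega⟩
  let c : Fin n → ZMod N := fun x => ((x : ℕ) : ZMod N)
  obtain ⟨κ, hκ, hκu, hκv, hκs⟩ : ∃ κ : Fin (r + 1) → ZMod N, Function.Injective κ ∧
      (∀ x, κ x ≠ c u) ∧ (∀ x, κ x ≠ c v) ∧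
      (c u = c v → κ = fun x : Fin (r + 1) => c u + ((x : ℕ) + 1 : ℕ)) := by
    by_cases h : c u = c v
    · have hne : ∀ x : Fin (r + 1), c u + ((x : ℕ) + 1 : ℕ) ≠ c u := by
        intro x hx
        have h1 : (((x : ℕ) + 1 : ℕ) : ZMod N) = ((0 : ℕ) : ZMod N) := by
          rw [Nat.cast_zero]
          exact add_eq_left.mp hx
        have := natCast_injOn (by omega) (by omega) h1
        omega
      exact ⟨_, shift_injective hN (c u), hne, fun x => h ▸ hne x, fun _ => rfl⟩
    · have hcard : Fintype.card (Fin (r + 1))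
          ≤ Fintype.card {x // x ∈ ({c u, c v}ᶜ : Finset (ZMod N))} := by
        rw [Fintype.card_coe, card_compl, card_pair h, ZMod.card, Fintype.card_fin]
        omega
      obtain ⟨e⟩ := Function.Embedding.nonempty_of_card_le hcard
      have he : ∀ x, (e x : ZMod N) ≠ c u ∧ (e x : ZMod N) ≠ c v := by
        intro x
        have := (e x).2
        simpa using this
      exact ⟨fun x => e x, Subtype.val_injective.comp e.injective, fun x => (he x).1,
        fun x => (he x).2, fun h' => absurd h' h⟩
  have hpi : (n / N) ^ (r + 1) ≤ (Fintype.piFinset fun x : Fin (r + 1) =>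
      univ.filter fun v : Fin n => c v = κ x).card := by
    rw [Fintype.card_piFinset]
    refine le_trans (le_of_eq ?_) (prod_le_prod' fun x _ => color_class (by omega) (κ x))
    simp
  refine hpi.trans (card_le_card fun w hw => ?_)
  rw [Fintype.mem_piFinset] at hw
  have hwc : ∀ x, c (w x) = κ x := fun x => (mem_filter.mp (hw x)).2
  have hwinj : Function.Injective w := fun x y h => hκ (by rw [← hwc, ← hwc, h])
  have hwu : ∀ x, w x ≠ u := fun x h => hκu x (by rw [← hwc, h])
  have hwv : ∀ x, w x ≠ v := fun x h => hκv x (by rw [← hwc, h])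
  have hv : v ∉ univ.image w := by simpa using hwv
  have hu : u ∉ insert v (univ.image w) := by
    simp only [mem_insert, mem_image, mem_univ, true_and, not_or, not_exists]
    exact ⟨huv, hwu⟩
  have hu' : u ∉ univ.image w := by simpa using hwu
  have hv' : v ∉ insert u (univ.image w) := by
    simp only [mem_insert, mem_image, mem_univ, true_and, not_or, not_exists]
    exact ⟨huv.symm, hwv⟩
  refine mem_filter.mpr ⟨mem_univ _, mem_filter.mpr ⟨mem_univ _, ?_, ?_⟩⟩
  · rw [card_insert_of_notMem hu, card_insert_of_notMem hv, card_image_of_injective _ hwinj]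
    simp
  · have hcolors : ∀ g, g = c u → c u = c v → (univ.image w).image c
        = univ.image fun x : Fin (r + 1) => g + ((x : ℕ) + 1 : ℕ) := by
      intro g hg h
      rw [image_image, hg, ← hκs h]
      exact image_congr fun x _ => hwc x
    intro a ha b hb hab hcab
    change c a = c b at hcab
    simp only [mem_insert, mem_image, mem_univ, true_and] at ha hb
    rcases ha with rfl | rfl | ⟨x, rfl⟩ <;> rcases hb with rfl | rfl | ⟨y, rfl⟩
    · exact absurd rfl hab
    · rw [erase_insert hu, erase_insert hv]
      exact hcolors _ rfl hcab
    · exact absurd (hcab.trans (hwc y)).symm (hκu y)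
    · rw [insert_comm, erase_insert hv', erase_insert hu']
      exact hcolors _ hcab hcab.symm
    · exact absurd rfl hab
    · exact absurd (hcab.trans (hwc y)).symm (hκv y)
    · exact absurd ((hwc x).symm.trans hcab) (hκu x)
    · exact absurd ((hwc x).symm.trans hcab) (hκv x)
    · rw [hwc, hwc] at hcab
      exact absurd (congrArg w (hκ hcab)) hab

/-! ### Small positive densities -/

/-- For `k ≥ 3`, zero is an accumulation point of `Π₂^k`: for every `ε > 0` there
is a `k`-graph `F` with `0 < π₂(F) < ε`. -/
theorem stmt_2 (k : ℕ) (hk : 3 ≤ k) (ε : ℝ) (hε : 0 < ε) :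
    ∃ (V : Finset ℕ) (E : Finset (Finset ℕ)) (x : ℝ),
      IsKGraph k V E ∧ HasTuranDensity k 2 V E x ∧ 0 < x ∧ x < ε := by
  obtain ⟨r, rfl⟩ : ∃ r, k = r + 3 := ⟨k - 3, by omega⟩
  set c : ℝ := min (ε / 4) 1 with hc
  have hc0 : 0 < c := by positivity
  have hc1 : c ≤ 1 := min_le_right _ _
  have hcε : 2 * c < ε := by
    have := min_le_left (ε / 4) 1
    linarith
  obtain ⟨t, ℓ, M, ht, hℓ, hw⟩ := pair_walks r c hc0 hc1
  -- one more starting vertex than residues forces a starting pair with equal residues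
  set N := (r + 1) * ℓ + r + 3 with hN
  let code : WVert r → ℕ := Encodable.encode
  have hcode : Function.Injective code := Encodable.encode_injective
  set E : Finset (Finset ℕ) := (walkEdges r t ℓ (N + 1)).image fun e => e.image code with hE
  set V : Finset ℕ := E.biUnion id with hV
  have hEV : ∀ e ∈ E, e ⊆ V ∧ e.card = r + 1 + 2 := by
    intro e he
    refine ⟨subset_biUnion_of_mem id he, ?_⟩
    obtain ⟨e', he', rfl⟩ := mem_image.mp he
    obtain ⟨i, j, s, b, hij, -, hs, rfl⟩ := mem_walkEdges.mp he'
    rw [card_image_of_injective _ hcode, card_walkEdge hℓ hij hs]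
  have hEne : E.Nonempty := by
    refine ⟨_, mem_image_of_mem _ (mem_walkEdges.mpr ⟨0, 1, 0, true, by omega, by omega,
      by omega, rfl⟩)⟩
  obtain ⟨x, hx⟩ := density_exists (r + 1) (by omega) V E hEne
  refine ⟨V, E, x, hEV, hx, ?_, ?_⟩
  · -- the shift graphs are `F`-free
    have hlow : (1 / (2 * (N : ℝ))) ^ (r + 1) ≤ x := by
      refine ge_of_tendsto hx ?_
      filter_upwards [eventually_ge_atTop (2 * N)] with n hn
      have hN0 : (0 : ℝ) < N := by exact_mod_cast (show 0 < N by omega)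
      have hnr : 2 * (N : ℝ) ≤ n := by exact_mod_cast hn
      have hH : ∀ e ∈ shiftGraph r N n, e.card = r + 1 + 2 := fun e he =>
        (mem_filter.mp he).2.1
      have hfree : ¬ ContainsCopy V E univ (shiftGraph r N n) := by
        rintro ⟨g, -, -, hg⟩
        refine shift_no_walk (t := t) (ℓ := ℓ) (N := N) ht hℓ (by omega) (by omega)
          (g ∘ code) fun e he => ?_
        rw [← image_image]
        exact hg _ (mem_image_of_mem _ he)
      have hdeg := minDeg_of_tup (r := r + 1) (by omega) (shiftGraph r N n) hH
        ((1 / (2 * (N : ℝ))) ^ (r + 1)) (fun u v huv => ?_)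
      · have h1 := le_exDeg _ n V E _ hH hfree
        have h2 : (0 : ℝ) < ((n - 2).choose (r + 1) : ℝ) := by
          have : r + 1 ≤ n - 2 := by omega
          exact_mod_cast Nat.choose_pos this
        simp only [Nat.add_sub_cancel]
        rw [le_div_iff₀ h2]
        exact hdeg.trans (by exact_mod_cast h1)
      · have h1 : ((n / N : ℕ) : ℝ) ^ (r + 1) ≤ tup (r + 1) (shiftGraph r N n) u v := by
          exact_mod_cast shift_tup (show r + 3 ≤ N by omega) u v huv
        refine le_trans ?_ h1
        have h2 : ((n - 2).descFactorial (r + 1) : ℝ) ≤ (n : ℝ) ^ (r + 1) := by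
          have h3 := Nat.descFactorial_le_pow (n - 2) (r + 1)
          have h4 : (n - 2) ^ (r + 1) ≤ n ^ (r + 1) := Nat.pow_le_pow_left (by omega) _
          exact_mod_cast h3.trans h4
        calc (1 / (2 * (N : ℝ))) ^ (r + 1) * ((n - 2).descFactorial (r + 1) : ℝ)
            ≤ (1 / (2 * (N : ℝ))) ^ (r + 1) * (n : ℝ) ^ (r + 1) := by gcongr
          _ = ((n : ℝ) / (2 * N)) ^ (r + 1) := by rw [← mul_pow]; congr 1; ring
          _ ≤ ((n / N : ℕ) : ℝ) ^ (r + 1) := by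
            gcongr
            have h5 : n < N * (n / N + 1) := Nat.lt_mul_div_succ n (by omega)
            have h6 : (n : ℝ) < N * ((n / N : ℕ) + 1) := by exact_mod_cast h5
            rw [div_le_iff₀ (by positivity)]
            linarith
    refine lt_of_lt_of_le ?_ hlow
    have hN0 : (0 : ℝ) < N := by exact_mod_cast (show 0 < N by omega)
    positivity
  · refine lt_of_le_of_lt ?_ hcε
    have : Nonempty (WVert r) := ⟨Sum.inl 0⟩
    obtain ⟨N0, hN0⟩ := upper_bound (r + 1) (by omega) V E hEV c hc0 hc1 (max M (N + 1))
      (fun m hm E' _ hdeg => by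
        obtain ⟨h, hh⟩ := walk_hom r t ℓ (N + 1) m (le_of_max_le_right hm)
          (by have := le_of_max_le_right hm; omega) E'
          (hw m (le_of_max_le_left hm) E' hdeg)
        refine ⟨h ∘ Function.invFun code, fun e he => ?_⟩
        obtain ⟨e', he', rfl⟩ := mem_image.mp he
        rw [image_image, Function.comp_assoc, Function.invFun_comp hcode]
        exact hh e' he')
    refine le_of_tendsto hx ?_
    filter_upwards [eventually_ge_atTop N0, eventually_ge_atTop (r + 3)] with n hn hn2
    obtain ⟨E', hE', hfree, hd⟩ := exDeg_spec (r + 1 + 2) n V E hEne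
    have h2 : (0 : ℝ) < ((n - 2).choose (r + 1) : ℝ) := by
      have : r + 1 ≤ n - 2 := by omega
      exact_mod_cast Nat.choose_pos this
    simp only [Nat.add_sub_cancel]
    rw [div_le_iff₀ h2, hd]
    by_contra hcon
    exact hfree (hN0 n hn E' hE' (not_le.mp hcon).le)
end

section
/- Let F be a k-graph, let σ be an ordering of V(F), and let 1 ≤ j < ℓ ≤ k be integers. Then σ is an ℓ-vanishing order of F if and only if for every (ℓ−j)-element subset S of V(F), the induced ordering σ|_{V(F)∖S} is a j-vanishing order of the link L_F(S). -/
/-!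
A coloring witnessing that `σ` is `ℓ`-vanishing exists exactly when any two edges `e`, `f` give
every common `ℓ`-subset `X` the same set of positions. Since position inside an edge is strictly
increasing in `σ`, equality of the position sets forces each vertex of `X` to have the same position
in `e` and in `f` (`vanishing_coloring_iff`). For `S ⊆ e`, the position of `x` in `e` is its
position in `e \ S` plus the number of elements of `S` up to `x` (`rankIn_eq_sdiff_add`), and the
second summand does not depend on `e`. So for `x ∉ S` the positions of `x` in `e` and `f` agree
iff its positions in `e \ S` and `f \ S` do. The forward direction applies this to `X = S ∪ Y`; for
the converse, given `X` and `x ∈ X`, take for `S` any `(ℓ - j)`-subset of `X` avoiding `x`, which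
exists because `j ≥ 1`.
-/

open Finset Filter

variable {α : Type*} {β : Type*}

lemma rankIn_le_rankIn_iff {α : Type*} {T : Finset α} {σ : α → ℕ} {x y : α} (hy : y ∈ T) :
    rankIn T σ y ≤ rankIn T σ x ↔ σ y ≤ σ x := by
  constructor
  · intro h
    by_contra! hlt
    refine absurd h (not_le.mpr (Finset.card_lt_card ?_))
    rw [Finset.ssubset_iff_of_subset]
    · exact ⟨y, by simp [hy], by simp [hlt]⟩
    · intro z hz
      simp only [Finset.mem_filter] at hz ⊢
      exact ⟨hz.1, by omega⟩
  · intro h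
    refine Finset.card_le_card fun z hz => ?_
    simp only [Finset.mem_filter] at hz ⊢
    exact ⟨hz.1, by omega⟩

lemma rankIn_injOn {α : Type*} {T : Finset α} {σ : α → ℕ} (hσ : Set.InjOn σ T) :
    Set.InjOn (rankIn T σ) T := by
  intro x hx y hy hxy
  exact hσ hx hy (le_antisymm ((rankIn_le_rankIn_iff hx).mp hxy.le)
    ((rankIn_le_rankIn_iff hy).mp hxy.ge))

/-- Passing from `σ` to its induced ordering of `T` does not change ranks inside subsets of `T`. -/
lemma rankIn_rankIn {α : Type*} {A T : Finset α} (hA : A ⊆ T) (σ : α → ℕ) :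
    rankIn A (rankIn T σ) = rankIn A σ := by
  funext x
  unfold rankIn
  congr 1
  exact Finset.filter_congr fun y hy => rankIn_le_rankIn_iff (hA hy)

lemma isOrdering_rankIn {α : Type*} {T : Finset α} {σ : α → ℕ} (hσ : Set.InjOn σ T) :
    IsOrdering T (rankIn T σ) := by
  have hmaps : ∀ x ∈ T, rankIn T σ x ∈ Finset.Icc 1 T.card := by
    intro x hx
    rw [Finset.mem_Icc]
    exact ⟨Finset.card_pos.mpr ⟨x, by simp [hx]⟩, Finset.card_filter_le _ _⟩
  refine ⟨fun x hx => by simpa using hmaps x hx, rankIn_injOn hσ, ?_⟩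
  have h := Finset.surjOn_of_injOn_of_card_le (rankIn T σ) (t := Finset.Icc 1 T.card)
    (fun x hx => hmaps x hx) (rankIn_injOn hσ) (by simp)
  simpa using h

lemma rankIn_eq_sdiff_add {α : Type*} [DecidableEq α] {e S : Finset α} (hS : S ⊆ e) (σ : α → ℕ)
    (x : α) : rankIn e σ x = rankIn (e \ S) σ x + rankIn S σ x := by
  unfold rankIn
  rw [← Finset.card_union_of_disjoint
    (Finset.disjoint_filter_filter Finset.sdiff_disjoint), ← Finset.filter_union,
    Finset.sdiff_union_of_subset hS]

/-- The rank of `x` in `X ⊆ e` can be read off from the set of positions of `X` in `e`. -/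
lemma rankIn_image_rankIn {α : Type*} {X e : Finset α} {σ : α → ℕ} (hσ : Set.InjOn σ e)
    (hX : X ⊆ e) (x : α) :
    rankIn (X.image (rankIn e σ)) id (rankIn e σ x) = rankIn X σ x := by
  have hinj : Set.InjOn (rankIn e σ) X := (rankIn_injOn hσ).mono (by exact_mod_cast hX)
  rw [← rankIn_rankIn hX]
  unfold rankIn at hinj ⊢
  rw [Finset.filter_image, Finset.card_image_of_injOn (hinj.mono (Finset.coe_subset.mpr (Finset.filter_subset _ _)))]
  rfl

lemma rankIn_eq_of_image_eq {α : Type*} {X e f : Finset α} {σ : α → ℕ}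
    (he : Set.InjOn σ e) (hf : Set.InjOn σ f) (hXe : X ⊆ e) (hXf : X ⊆ f)
    (h : X.image (rankIn e σ) = X.image (rankIn f σ)) {x : α} (hx : x ∈ X) :
    rankIn e σ x = rankIn f σ x := by
  refine rankIn_injOn (T := X.image (rankIn e σ)) (σ := id) (Set.injOn_id _) ?_ ?_ ?_
  · exact Finset.mem_coe.mpr (Finset.mem_image_of_mem _ hx)
  · rw [h]
    exact Finset.mem_coe.mpr (Finset.mem_image_of_mem _ hx)
  · rw [rankIn_image_rankIn he hXe, h, rankIn_image_rankIn hf hXf]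

/-- A position coloring of `m`-sets exists iff any two edges assign the same positions to the
vertices of each common `m`-subset. -/
lemma vanishing_coloring_iff {α : Type*} [DecidableEq α] {m : ℕ} {E : Finset (Finset α)}
    {σ : α → ℕ} (hσ : ∀ e ∈ E, Set.InjOn σ e) :
    (∃ φ : Finset α → Finset ℕ,
      ∀ e ∈ E, ∀ X ⊆ e, X.card = m → φ X = X.image (rankIn e σ)) ↔
    ∀ e ∈ E, ∀ f ∈ E, ∀ X ⊆ e, X ⊆ f → X.card = m → ∀ x ∈ X, rankIn e σ x = rankIn f σ x := by
  classical
  constructor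
  · rintro ⟨φ, hφ⟩ e he f hf X hXe hXf hX x hx
    exact rankIn_eq_of_image_eq (hσ e he) (hσ f hf) hXe hXf
      ((hφ e he X hXe hX).symm.trans (hφ f hf X hXf hX)) hx
  · intro h
    -- Color `X` by its positions in an arbitrarily chosen edge containing it.
    refine ⟨fun X => if hX : ∃ e ∈ E, X ⊆ e then X.image (rankIn hX.choose σ) else ∅, ?_⟩
    intro e he X hXe hX
    have hex : ∃ e ∈ E, X ⊆ e := ⟨e, he, hXe⟩
    simp only [dif_pos hex]
    exact Finset.image_congr fun x hx =>
      h _ hex.choose_spec.1 e he X hex.choose_spec.2 hXe hX x hx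

/-- For `1 ≤ j < ℓ ≤ k`, an ordering `σ` of `V(F)` is an `ℓ`-vanishing order of the
`k`-graph `F` iff for every `(ℓ-j)`-subset `S` of `V(F)`, the induced ordering of `V(F) \ S` is a
`j`-vanishing order of the link of `S`. -/
theorem stmt_4 {α : Type*} [DecidableEq α] (k ℓ j : ℕ) (hj : 1 ≤ j) (hjℓ : j < ℓ) (hℓk : ℓ ≤ k)
    (V : Finset α) (E : Finset (Finset α)) (hF : IsKGraph k V E)
    (σ : α → ℕ) (hσ : IsOrdering V σ) :
    IsVanishingOrder ℓ V E σ ↔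
      ∀ S ⊆ V, S.card = ℓ - j →
        IsVanishingOrder j (V \ S) (linkE E S) (rankIn (V \ S) σ) := by
  have hinj : ∀ A ⊆ V, Set.InjOn σ A := fun A hA => hσ.injOn.mono (by exact_mod_cast hA)
  have hlink : ∀ S, ∀ e ∈ linkE E S, e ⊆ V \ S := by
    intro S e he
    simp only [linkE, Finset.mem_image, Finset.mem_filter] at he
    obtain ⟨g, ⟨hg, -⟩, rfl⟩ := he
    exact Finset.sdiff_subset_sdiff (hF g hg).1 subset_rfl
  have hlinkinj : ∀ S, ∀ e ∈ linkE E S, Set.InjOn (rankIn (V \ S) σ) e := fun S e he =>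
    (rankIn_injOn (hinj _ Finset.sdiff_subset)).mono (by exact_mod_cast hlink S e he)
  unfold IsVanishingOrder
  rw [vanishing_coloring_iff fun e he => hinj e (hF e he).1]
  constructor
  · rintro ⟨-, h⟩ S hSV hS
    refine ⟨isOrdering_rankIn (hinj _ Finset.sdiff_subset), ?_⟩
    rw [vanishing_coloring_iff (hlinkinj S)]
    intro e he f hf Y hYe hYf hY y hy
    rw [rankIn_rankIn (hlink S e he), rankIn_rankIn (hlink S f hf)]
    simp only [linkE, Finset.mem_image, Finset.mem_filter] at he hf
    obtain ⟨e, ⟨he, hSe⟩, rfl⟩ := he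
    obtain ⟨f, ⟨hf, hSf⟩, rfl⟩ := hf
    have hdisj : Disjoint S Y := Finset.disjoint_of_subset_right hYe Finset.disjoint_sdiff
    have key := h e he f hf (S ∪ Y)
      (Finset.union_subset hSe (hYe.trans Finset.sdiff_subset))
      (Finset.union_subset hSf (hYf.trans Finset.sdiff_subset))
      (by rw [Finset.card_union_of_disjoint hdisj]; omega) y (Finset.mem_union_right _ hy)
    rw [rankIn_eq_sdiff_add hSe, rankIn_eq_sdiff_add hSf] at key
    omega
  · intro h
    refine ⟨hσ, fun e he f hf X hXe hXf hX x hx => ?_⟩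
    -- `X \ {x}` has `ℓ - 1 ≥ ℓ - j` elements, so `S` can be chosen to avoid `x`.
    obtain ⟨S, hSX, hS⟩ := Finset.exists_subset_card_eq (s := X.erase x) (n := ℓ - j)
      (by rw [Finset.card_erase_of_mem hx]; omega)
    have hxS : x ∉ S := fun hxS => Finset.notMem_erase x X (hSX hxS)
    replace hSX : S ⊆ X := hSX.trans (Finset.erase_subset _ _)
    have hSe := hSX.trans hXe
    have hSf := hSX.trans hXf
    have hmem : ∀ g ∈ E, S ⊆ g → g \ S ∈ linkE E S := fun g hg hSg =>
      Finset.mem_image_of_mem _ (Finset.mem_filter.mpr ⟨hg, hSg⟩)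
    have key := (vanishing_coloring_iff (hlinkinj S)).mp (h S (hSe.trans (hF e he).1) hS).2
      _ (hmem e he hSe) _ (hmem f hf hSf) (X \ S)
      (Finset.sdiff_subset_sdiff hXe subset_rfl) (Finset.sdiff_subset_sdiff hXf subset_rfl)
      (by rw [Finset.card_sdiff_of_subset hSX]; omega) x (Finset.mem_sdiff.mpr ⟨hx, hxS⟩)
    rw [rankIn_rankIn (hlink S _ (hmem e he hSe)),
      rankIn_rankIn (hlink S _ (hmem f hf hSf))] at key
    rw [rankIn_eq_sdiff_add hSe, rankIn_eq_sdiff_add hSf, key]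
end

section
/- Let F be a k-graph, let σ be an ordering of V(F), and let 1 ≤ ℓ ≤ k be an integer. Then σ is an ℓ-vanishing order of F if and only if for every ℓ-element subset S of V(F) and every pair of edges e, e' ∈ E(F) with S ⊆ e and S ⊆ e', the index vectors satisfy I_{S,σ}(e) = I_{S,σ}(e'). -/
/-!
For an edge `e ⊇ S` and `x ∈ S` of rank `r` within `S`, the vertices of `e` up to `x` are the `r`
vertices of `S` up to `x` together with those vertices of `e` outside `S` that lie in the first `r`
gaps of `S`. Hence (`rankIn_eq_add_sum`) the rank of `x` in `e` is `r` plus the sum of the first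
`r` coordinates of the index vector. So, for two edges containing `S`, the index vectors agree iff
every vertex of `S` has the same rank in both; here one uses that each `r ∈ [1, |S|]` is the rank
of some vertex of `S` (`exists_rankIn_eq`).

It remains to see that the set of ranks occupied by `S` already determines the rank of each vertex
of `S`: the vertex of rank `r` in `S` occupies the `r`-th smallest element of that set
(`card_filter_image_rankIn`).
-/

open Finset Filter

variable {α : Type*} {β : Type*}

/-- The `i`-th coordinate (1-based, `1 ≤ i ≤ |X|`) of the index vector `I_{X,σ}(Y)`: the number
of `y ∈ Y` with `σ(x_{i-1}) < σ(y) < σ(x_i)`, where `x_1, …, x_s` lists `X` in increasing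
`σ`-order and `σ(x_0) = 0`.  (For `y ∉ X`, lying strictly between `x_{i-1}` and `x_i` is
equivalent to exactly `i - 1` elements of `X` having smaller `σ`-value.) -/
def indexVec [DecidableEq α] (σ : α → ℕ) (X Y : Finset α) (i : ℕ) : ℕ :=
  (Y.filter fun y => y ∉ X ∧ (X.filter fun x => σ x < σ y).card = i - 1).card

lemma rankIn_le_iff {T : Finset α} {σ : α → ℕ} {x y : α} (hx : x ∈ T) :
    rankIn T σ x ≤ rankIn T σ y ↔ σ x ≤ σ y := by
  constructor
  · intro h
    by_contra! hlt
    refine absurd h (not_le.2 (Finset.card_lt_card ?_))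
    refine Finset.ssubset_iff_of_subset (fun z hz => ?_) |>.2 ⟨x, by simp [hx], by simp [hlt]⟩
    simp only [Finset.mem_filter] at hz ⊢
    exact ⟨hz.1, by omega⟩
  · intro h
    refine Finset.card_le_card fun z hz => ?_
    simp only [Finset.mem_filter] at hz ⊢
    exact ⟨hz.1, by omega⟩

lemma one_le_rankIn {T : Finset α} {σ : α → ℕ} {x : α} (hx : x ∈ T) : 1 ≤ rankIn T σ x :=
  Finset.card_pos.2 ⟨x, by simp [hx]⟩

lemma exists_rankIn_eq {S : Finset α} {σ : α → ℕ} (hinj : Set.InjOn σ (S : Set α)) {r : ℕ}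
    (hr : r ∈ Finset.Icc 1 S.card) : ∃ x ∈ S, rankIn S σ x = r := by
  have hsurj := Finset.surjOn_of_injOn_of_card_le (s := S) (t := Finset.Icc 1 S.card)
    (rankIn S σ)
    (fun x hx => by
      simpa using ⟨one_le_rankIn hx, Finset.card_le_card (Finset.filter_subset _ _)⟩)
    (fun x hx y hy h => hinj hx hy
      (le_antisymm ((rankIn_le_iff hx).1 h.le) ((rankIn_le_iff hy).1 h.ge)))
    (by simp)
  exact hsurj hr

/-- A vertex `y` comes no later than the `r`-th vertex `x` of `S` iff fewer than `r` vertices of `S`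
precede `y`; for `y ∉ S` this says that `y` lies in one of the first `r` gaps of `S`. -/
lemma le_iff_gap_lt {S : Finset α} {σ : α → ℕ} {x y : α} (hx : x ∈ S) :
    σ y ≤ σ x ↔ (S.filter fun z => σ z < σ y).card + 1 ≤ rankIn S σ x := by
  constructor
  · intro h
    refine Finset.card_lt_card ?_
    refine Finset.ssubset_iff_of_subset (fun z hz => ?_) |>.2 ⟨x, by simp [hx], by simp [h]⟩
    simp only [Finset.mem_filter] at hz ⊢
    exact ⟨hz.1, by omega⟩
  · intro h
    by_contra! hlt
    refine absurd h (not_le.2 (Nat.lt_succ_of_le (Finset.card_le_card fun z hz => ?_)))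
    simp only [Finset.mem_filter] at hz ⊢
    exact ⟨hz.1, by omega⟩

lemma rankIn_eq_add_sum [DecidableEq α] {S e : Finset α} {σ : α → ℕ}
    (hS : S ⊆ e) {x : α} (hx : x ∈ S) :
    rankIn e σ x
      = rankIn S σ x + ∑ i ∈ Finset.Icc 1 (rankIn S σ x), indexVec σ S e i := by
  have hin : (e.filter fun y => σ y ≤ σ x).filter (· ∈ S) = S.filter fun y => σ y ≤ σ x := by
    ext y
    simp only [Finset.mem_filter]
    exact ⟨fun h => ⟨h.2, h.1.2⟩, fun h => ⟨⟨hS h.1, h.2⟩, h.1⟩⟩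
  have hout : ((e.filter fun y => σ y ≤ σ x).filter (· ∉ S)).card
      = ∑ i ∈ Finset.Icc 1 (rankIn S σ x), indexVec σ S e i := by
    rw [Finset.card_eq_sum_card_fiberwise
      (f := fun y => (S.filter fun z => σ z < σ y).card + 1)
      (t := Finset.Icc 1 (rankIn S σ x))]
    · refine Finset.sum_congr rfl fun i hi => ?_
      rw [Finset.mem_Icc] at hi
      unfold indexVec
      congr 1
      ext y
      simp only [Finset.mem_filter]
      constructor
      · rintro ⟨⟨⟨hy, -⟩, hyS⟩, h⟩
        exact ⟨hy, hyS, by omega⟩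
      · rintro ⟨hy, hyS, h⟩
        exact ⟨⟨⟨hy, (le_iff_gap_lt hx).2 (by omega)⟩, hyS⟩, by omega⟩
    · intro y hy
      simp only [Finset.coe_filter, Finset.mem_filter, Set.mem_ofPred_eq] at hy
      simp only [Finset.coe_Icc, Set.mem_Icc]
      exact ⟨by omega, (le_iff_gap_lt hx).1 hy.1.2⟩
  rw [rankIn, ← Finset.card_filter_add_card_filter_not (· ∈ S), hin, hout]
  rfl

/-- The rank of `x` within `S` can be read off from the set of ranks that `S` occupies in `e`. -/
lemma card_filter_image_rankIn {S e : Finset α} {σ : α → ℕ}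
    (hinj : Set.InjOn σ (e : Set α)) (hS : S ⊆ e) {x : α} :
    ((S.image (rankIn e σ)).filter (· ≤ rankIn e σ x)).card = rankIn S σ x := by
  rw [Finset.filter_image, Finset.card_image_of_injOn]
  · unfold rankIn
    congr 1
    exact Finset.filter_congr fun y hy => rankIn_le_iff (hS hy)
  · intro y hy z hz h
    simp only [Finset.coe_filter, Set.mem_ofPred_eq] at hy hz
    exact hinj (hS hy.1) (hS hz.1)
      (le_antisymm ((rankIn_le_iff (hS hy.1)).1 h.le) ((rankIn_le_iff (hS hz.1)).1 h.ge))

lemma eq_of_card_filter_le_eq {A : Finset ℕ} {a b : ℕ} (ha : a ∈ A) (hb : b ∈ A)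
    (h : (A.filter (· ≤ a)).card = (A.filter (· ≤ b)).card) : a = b :=
  le_antisymm ((rankIn_le_iff (σ := id) ha).1 h.le) ((rankIn_le_iff (σ := id) hb).1 h.ge)

lemma rankIn_eq_of_image_eq_s6 {S e e' : Finset α} {σ : α → ℕ}
    (hinj : Set.InjOn σ (e : Set α)) (hinj' : Set.InjOn σ (e' : Set α)) (hS : S ⊆ e) (hS' : S ⊆ e')
    (h : S.image (rankIn e σ) = S.image (rankIn e' σ)) {x : α} (hx : x ∈ S) :
    rankIn e σ x = rankIn e' σ x := by
  refine eq_of_card_filter_le_eq (Finset.mem_image_of_mem _ hx)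
    (h ▸ Finset.mem_image_of_mem _ hx) ?_
  rw [card_filter_image_rankIn hinj hS, h, card_filter_image_rankIn hinj' hS']

/-- By `rankIn_eq_add_sum`, equal ranks give equal partial sums of the index vectors, whose
successive differences are the coordinates. -/
lemma indexVec_eq_of_rankIn_eq [DecidableEq α] {S e e' : Finset α} {σ : α → ℕ}
    (hinj : Set.InjOn σ (e : Set α)) (hS : S ⊆ e) (hS' : S ⊆ e')
    (h : ∀ x ∈ S, rankIn e σ x = rankIn e' σ x) {i : ℕ} (hi : i ∈ Finset.Icc 1 S.card) :
    indexVec σ S e i = indexVec σ S e' i := by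
  have hsum : ∀ r ≤ S.card, ∑ j ∈ Finset.Icc 1 r, indexVec σ S e j
      = ∑ j ∈ Finset.Icc 1 r, indexVec σ S e' j := by
    intro r hr
    obtain rfl | hr0 := Nat.eq_zero_or_pos r
    · simp
    obtain ⟨x, hx, rfl⟩ := exists_rankIn_eq (hinj.mono (Finset.coe_subset.2 hS))
      (Finset.mem_Icc.2 ⟨hr0, hr⟩)
    have := h x hx
    rw [rankIn_eq_add_sum hS hx, rankIn_eq_add_sum hS' hx] at this
    omega
  rw [Finset.mem_Icc] at hi
  obtain ⟨n, rfl⟩ : ∃ n, i = n + 1 := ⟨i - 1, by omega⟩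
  have h1 := hsum n (by omega)
  have h2 := hsum (n + 1) hi.2
  rw [Finset.sum_Icc_succ_top (by omega), Finset.sum_Icc_succ_top (by omega)] at h2
  omega

/-- For `1 ≤ ℓ ≤ k`, an ordering `σ` of `V(F)` is an `ℓ`-vanishing order of the
`k`-graph `F` iff for every `ℓ`-subset `S` and all edges `e, e'` containing `S`, the index
vectors `I_{S,σ}(e)` and `I_{S,σ}(e')` coincide. -/
theorem stmt_6 {α : Type*} [DecidableEq α] (k ℓ : ℕ) (hℓ : 1 ≤ ℓ) (hℓk : ℓ ≤ k)
    (V : Finset α) (E : Finset (Finset α)) (hF : IsKGraph k V E)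
    (σ : α → ℕ) (hσ : IsOrdering V σ) :
    IsVanishingOrder ℓ V E σ ↔
      ∀ S ⊆ V, S.card = ℓ → ∀ e ∈ E, ∀ e' ∈ E, S ⊆ e → S ⊆ e' →
        ∀ i ∈ Finset.Icc 1 ℓ, indexVec σ S e i = indexVec σ S e' i := by
  have hinj : ∀ e ∈ E, Set.InjOn σ (e : Set α) := fun e he =>
    hσ.injOn.mono (Finset.coe_subset.2 (hF e he).1)
  constructor
  · rintro ⟨-, φ, hφ⟩ S - hS e he e' he' hSe hSe' i hi
    refine indexVec_eq_of_rankIn_eq (hinj e he) hSe hSe' (fun x hx => ?_)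
      (hS.symm ▸ hi)
    exact rankIn_eq_of_image_eq_s6 (hinj e he) (hinj e' he') hSe hSe'
      ((hφ e he S hSe hS).symm.trans (hφ e' he' S hSe' hS)) hx
  · intro H
    classical
    -- Colour `X` by the ranks it occupies in an arbitrary edge containing it.
    refine ⟨hσ, fun X => if h : ∃ e ∈ E, X ⊆ e then X.image (rankIn h.choose σ) else ∅, ?_⟩
    intro e he X hXe hX
    have h : ∃ e ∈ E, X ⊆ e := ⟨e, he, hXe⟩
    obtain ⟨hc, hXc⟩ := h.choose_spec
    refine (dif_pos h).trans ?_
    refine Finset.image_congr fun x hx => ?_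
    rw [rankIn_eq_add_sum hXc hx, rankIn_eq_add_sum hXe hx]
    congr 1
    refine Finset.sum_congr rfl fun i hi => ?_
    refine H X (hXe.trans (hF e he).1) hX _ hc e he hXc hXe i ?_
    rw [Finset.mem_Icc] at hi ⊢
    exact ⟨hi.1, hX ▸ hi.2.trans (Finset.card_le_card (Finset.filter_subset _ _))⟩
end

section
/- Let 1 ≤ ℓ < k and r > k be integers, and let K_r^{(ℓ)+} be the k-expansion of the complete ℓ-graph K_r^{(ℓ)} on r vertices. Then π_ℓ(K_r^{(ℓ)+}) = 0, and every ordering of V(K_r^{(ℓ)+}) is an ℓ-vanishing order of K_r^{(ℓ)+}. -/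
/-!
Two distinct edges of the `k`-expansion of `K_r^{(ℓ)}` meet only in original vertices, and in fewer
than `ℓ` of them. Hence every `ℓ`-set of vertices lies in at most one edge, so a coloring may
assign to it its set of positions inside that edge, whatever the ordering is
(`edge_unique_of_subset`).

For the density, fix any `r` vertices of a host `H` and embed the edges of the expansion one at a
time. An `ℓ`-set `S` and a set `U` of at most `m = r + C(r, ℓ) (k - ℓ)` used vertices are given, and
an edge through `S` avoiding `U \ S` is needed; at most `m C(n - ℓ - 1, k - ℓ - 1)` edges
through `S` fail (`degS_le_of_blocked`). Thus a host without a copy of the expansion has minimum `ℓ`-degree at most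
`m C(n - ℓ - 1, k - ℓ - 1)` (`exDeg_le`), which is `m (k - ℓ) / (n - ℓ)` times
`C(n - ℓ, k - ℓ)`, hence negligible.
-/

open Finset Filter

variable {α : Type*} {β : Type*}

/-- Vertex type for the `k`-expansion of an `ℓ`-graph on `ℕ`: original vertices are `Sum.inl i`,
and the `j`-th expansion vertex of the edge `e` is `Sum.inr (e, j)`. -/
abbrev ExpV : Type := ℕ ⊕ (Finset ℕ × ℕ)

/-- The vertex set of the `k`-expansion `K_r^{(ℓ)+}` of the complete `ℓ`-graph on `r` vertices:
the `r` original vertices together with `k - ℓ` fresh vertices for each `ℓ`-subset of them. -/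
def expVerts (k ℓ r : ℕ) : Finset ExpV :=
  ((range r).image Sum.inl) ∪ (((range r).powersetCard ℓ ×ˢ range (k - ℓ)).image Sum.inr)

/-- The edge set of the `k`-expansion `K_r^{(ℓ)+}`: each edge `e` of `K_r^{(ℓ)}` is enlarged by
its own `k - ℓ` fresh vertices, distinct edges getting disjoint sets of fresh vertices. -/
def expEdges (k ℓ r : ℕ) : Finset (Finset ExpV) :=
  ((range r).powersetCard ℓ).image fun e =>
    e.image Sum.inl ∪ (range (k - ℓ)).image fun j => Sum.inr (e, j)

lemma card_filter_superset_le {n k : ℕ} (E : Finset (Finset (Fin n)))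
    (hE : ∀ e ∈ E, e.card = k) (A : Finset (Fin n)) :
    (E.filter fun e => A ⊆ e).card ≤ (n - A.card).choose (k - A.card) := by
  have h : (powersetCard (k - A.card) (univ \ A)).card = (n - A.card).choose (k - A.card) := by
    rw [card_powersetCard, card_sdiff_of_subset (subset_univ _), card_univ, Fintype.card_fin]
  rw [← h]
  refine card_le_card_of_injOn (fun e => e \ A) ?_ ?_
  · intro e he
    have he := mem_filter.1 (mem_coe.1 he)
    refine mem_coe.2 (mem_powersetCard.2 ⟨sdiff_subset_sdiff (subset_univ _) le_rfl, ?_⟩)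
    rw [card_sdiff_of_subset he.2, hE e he.1]
  · intro e he e' he' heq
    have he := mem_filter.1 (mem_coe.1 he)
    have he' := mem_filter.1 (mem_coe.1 he')
    have heq : e \ A = e' \ A := heq
    rw [← sdiff_union_of_subset he.2, heq, sdiff_union_of_subset he'.2]

/-- If every edge through the `ℓ`-set `S` meets `U` outside `S`, then `S` has small degree: sum
over the vertex of `U \ S` that is met. -/
lemma degS_le_of_blocked {n k ℓ m : ℕ} (E : Finset (Finset (Fin n)))
    (hE : ∀ e ∈ E, e.card = k) (S U : Finset (Fin n)) (hS : S.card = ℓ) (hU : U.card ≤ m)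
    (h : ∀ e ∈ E, S ⊆ e → ¬ Disjoint (e \ S) U) :
    degS E S ≤ m * (n - ℓ - 1).choose (k - ℓ - 1) := by
  have hsub : (E.filter fun e => S ⊆ e) ⊆
      (U \ S).biUnion fun u => E.filter fun e => insert u S ⊆ e := by
    intro e he
    obtain ⟨heE, hSe⟩ := mem_filter.1 he
    obtain ⟨u, hu, huU⟩ := not_disjoint_iff.1 (h e heE hSe)
    obtain ⟨hue, huS⟩ := mem_sdiff.1 hu
    exact mem_biUnion.2 ⟨u, mem_sdiff.2 ⟨huU, huS⟩,
      mem_filter.2 ⟨heE, insert_subset hue hSe⟩⟩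
  refine (card_le_card hsub).trans ((card_biUnion_le_card_mul _ _
    ((n - ℓ - 1).choose (k - ℓ - 1)) ?_).trans
      (Nat.mul_le_mul_right _ ((card_le_card sdiff_subset).trans hU)))
  intro u hu
  have := card_filter_superset_le E hE (insert u S)
  rwa [card_insert_of_notMem (mem_sdiff.1 hu).2, hS, ← Nat.sub_sub, ← Nat.sub_sub] at this

/-- Greedy choice of the fresh vertices: if a blocking set of size at most
`r + C(r, ℓ) (k - ℓ)` never exists, then the `ℓ`-sets in `T` can be extended to edges of `E` by
pairwise disjoint sets `g s` that avoid the image of the original vertices. -/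
lemma exists_extension {n k ℓ r : ℕ} (E : Finset (Finset (Fin n)))
    (hE : ∀ e ∈ E, e.card = k) (ι : ℕ → Fin n) (hι : Set.InjOn ι ↑(range r))
    (h : ∀ S U : Finset (Fin n), S.card = ℓ → U.card ≤ r + r.choose ℓ * (k - ℓ) →
      ∃ e ∈ E, S ⊆ e ∧ Disjoint (e \ S) U)
    (T : Finset (Finset ℕ)) (hT : T ⊆ (range r).powersetCard ℓ) :
    ∃ g : Finset ℕ → Finset (Fin n), ∀ s ∈ T, s.image ι ∪ g s ∈ E ∧ (g s).card = k - ℓ ∧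
      Disjoint (g s) ((range r).image ι) ∧ ∀ t ∈ T, t ≠ s → Disjoint (g s) (g t) := by
  induction T using Finset.induction_on with
  | empty => exact ⟨fun _ => ∅, by simp⟩
  | insert s T hs ih =>
    obtain ⟨g, hg⟩ := ih ((subset_insert _ _).trans hT)
    obtain ⟨hsr, hsc⟩ := mem_powersetCard.1 (hT (mem_insert_self _ _))
    have hScard : (s.image ι).card = ℓ := by
      rw [card_image_of_injOn (hι.mono (coe_subset.2 hsr)), hsc]
    have hUcard : ((range r).image ι ∪ T.biUnion g).card ≤ r + r.choose ℓ * (k - ℓ) := by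
      refine (card_union_le _ _).trans (Nat.add_le_add ?_ ?_)
      · exact card_image_le.trans (card_range r).le
      · refine (card_biUnion_le_card_mul _ _ (k - ℓ) fun t ht => (hg t ht).2.1.le).trans
          (Nat.mul_le_mul_right _ ?_)
        have := card_le_card ((subset_insert s T).trans hT)
        rwa [card_powersetCard, card_range] at this
    obtain ⟨e, heE, hSe, hd⟩ := h _ _ hScard hUcard
    rw [disjoint_union_right, disjoint_biUnion_right] at hd
    have hne : ∀ t ∈ T, t ≠ s := fun t ht hts => hs (hts ▸ ht)
    refine ⟨Function.update g s (e \ s.image ι), ?_⟩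
    intro a ha
    rcases mem_insert.1 ha with rfl | haT
    · rw [Function.update_self]
      refine ⟨?_, ?_, hd.1, ?_⟩
      · rwa [union_sdiff_of_subset hSe]
      · rw [card_sdiff_of_subset hSe, hE e heE, hScard]
      · intro t ht hta
        rw [Function.update_of_ne hta]
        exact hd.2 t (mem_of_mem_insert_of_ne ht hta)
    · rw [Function.update_of_ne (hne a haT)]
      obtain ⟨h1, h2, h3, h4⟩ := hg a haT
      refine ⟨h1, h2, h3, ?_⟩
      intro t ht hta
      rcases mem_insert.1 ht with rfl | ht
      · rw [Function.update_self]
        exact (hd.2 a haT).symm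
      · rw [Function.update_of_ne (hne t ht)]
        exact h4 t ht hta

lemma exists_enumeration {n c : ℕ} (hn : 0 < n) (A : Finset (Fin n)) (hA : A.card = c) :
    ∃ f : ℕ → Fin n, Set.InjOn f ↑(range c) ∧ (range c).image f = A := by
  have hinj : Set.InjOn (fun j => if h : j < c then A.orderEmbOfFin hA ⟨j, h⟩ else ⟨0, hn⟩)
      ↑(range c) := by
    intro i hi j hj hij
    have hi := mem_range.1 (mem_coe.1 hi)
    have hj := mem_range.1 (mem_coe.1 hj)
    simpa [hi, hj] using hij
  refine ⟨_, hinj, eq_of_subset_of_card_le ?_ ?_⟩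
  · intro x hx
    obtain ⟨j, hj, rfl⟩ := mem_image.1 hx
    simp [mem_range.1 hj]
  · rw [card_image_of_injOn hinj, card_range, hA]

lemma containsCopy_of_not_blocked {n k ℓ r : ℕ} (hn : 0 < n) (hr : r ≤ n)
    (E : Finset (Finset (Fin n))) (hE : ∀ e ∈ E, e.card = k)
    (h : ∀ S U : Finset (Fin n), S.card = ℓ → U.card ≤ r + r.choose ℓ * (k - ℓ) →
      ∃ e ∈ E, S ⊆ e ∧ Disjoint (e \ S) U) :
    ContainsCopy (expVerts k ℓ r) (expEdges k ℓ r) (univ : Finset (Fin n)) E := by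
  obtain ⟨R, -, hR⟩ := exists_subset_card_eq (s := (univ : Finset (Fin n))) (n := r) (by simpa)
  obtain ⟨ι, hι, -⟩ := exists_enumeration hn R hR
  obtain ⟨g, hg⟩ := exists_extension E hE ι hι h _ le_rfl
  have henum : ∀ s, ∃ f : ℕ → Fin n, s ∈ (range r).powersetCard ℓ →
      Set.InjOn f ↑(range (k - ℓ)) ∧ (range (k - ℓ)).image f = g s := by
    intro s
    by_cases hs : s ∈ (range r).powersetCard ℓ
    · obtain ⟨f, hf⟩ := exists_enumeration hn (g s) (hg s hs).2.1
      exact ⟨f, fun _ => hf⟩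
    · exact ⟨ι, fun h => absurd h hs⟩
  choose f hf using henum
  have hmem : ∀ s ∈ (range r).powersetCard ℓ, ∀ j ∈ range (k - ℓ), f s j ∈ g s := by
    intro s hs j hj
    rw [← (hf s hs).2]
    exact mem_image_of_mem _ hj
  refine ⟨Sum.elim ι fun p => f p.1 p.2, ?_, fun _ _ => mem_univ _, ?_⟩
  · have hcross : ∀ i ∈ range r, ∀ s ∈ (range r).powersetCard ℓ, ∀ j ∈ range (k - ℓ),
        ι i ≠ f s j := fun i hi s hs j hj hij =>
      disjoint_left.1 (hg s hs).2.2.1 (hmem s hs j hj) (hij ▸ mem_image_of_mem _ hi)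
    rintro (i | ⟨s, j⟩) hx (i' | ⟨t, j'⟩) hy hxy <;>
      simp only [expVerts, mem_coe, mem_union, mem_image, mem_product, Sum.inl.injEq,
        Sum.inr.injEq, reduceCtorEq, and_false, exists_false, or_false, false_or,
        exists_eq_right, Sum.elim_inl, Sum.elim_inr] at hx hy hxy
    · rw [hι (mem_coe.2 hx) (mem_coe.2 hy) hxy]
    · exact absurd hxy (hcross i hx t hy.1 j' hy.2)
    · exact absurd hxy.symm (hcross i' hy s hx.1 j hx.2)
    · by_cases hst : t = s
      · subst hst
        rw [(hf t hx.1).1 (mem_coe.2 hx.2) (mem_coe.2 hy.2) hxy]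
      · exact absurd (hxy ▸ hmem t hy.1 j' hy.2)
          (disjoint_left.1 ((hg s hx.1).2.2.2 t hy.1 hst) (hmem s hx.1 j hx.2))
  · intro e he
    obtain ⟨s, hs, rfl⟩ := mem_image.1 he
    have := (hg s hs).1
    rw [← (hf s hs).2] at this
    rw [image_union, image_image, image_image]
    exact this

lemma exDeg_le {n k ℓ r : ℕ} (hn : 0 < n) (hr : r ≤ n) :
    exDeg k ℓ n (expVerts k ℓ r) (expEdges k ℓ r) ≤
      (r + r.choose ℓ * (k - ℓ)) * (n - ℓ - 1).choose (k - ℓ - 1) := by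
  refine csSup_le' ?_
  rintro d ⟨E, hE, hfree, rfl⟩
  by_contra hlt
  refine hfree (containsCopy_of_not_blocked hn hr E hE ?_)
  by_contra! hbl
  obtain ⟨S, U, hS, hU, hSU⟩ := hbl
  have hdeg : minDeg ℓ univ E ≤ degS E S := Nat.sInf_le ⟨S, subset_univ _, hS, rfl⟩
  exact hlt (hdeg.trans (degS_le_of_blocked E hE S U hS hU hSU))

lemma hasTuranDensity_zero {k ℓ r : ℕ} (hℓk : ℓ < k) :
    HasTuranDensity k ℓ (expVerts k ℓ r) (expEdges k ℓ r) 0 := by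
  have hlim : Tendsto (fun n : ℕ => ((r + r.choose ℓ * (k - ℓ) : ℕ) * (k - ℓ : ℕ) : ℝ) /
      ((n - ℓ : ℕ) : ℝ)) atTop (nhds 0) :=
    (tendsto_const_div_atTop_nhds_zero_nat _).comp (tendsto_sub_atTop_nat ℓ)
  refine squeeze_zero' (Eventually.of_forall fun n => by positivity) ?_ hlim
  filter_upwards [eventually_ge_atTop (k + r)] with n hn
  have hex := exDeg_le (n := n) (k := k) (ℓ := ℓ) (r := r) (by omega) (by omega)
  have hpos : 0 < (n - ℓ).choose (k - ℓ) := Nat.choose_pos (by omega)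
  have hid := Nat.add_one_mul_choose_eq (n - ℓ - 1) (k - ℓ - 1)
  rw [show n - ℓ - 1 + 1 = n - ℓ by omega, show k - ℓ - 1 + 1 = k - ℓ by omega] at hid
  rw [div_le_div_iff₀ (by exact_mod_cast hpos) (by exact_mod_cast (by omega : 0 < n - ℓ))]
  norm_cast
  calc _ ≤ (r + r.choose ℓ * (k - ℓ)) * (n - ℓ - 1).choose (k - ℓ - 1) * (n - ℓ) :=
        Nat.mul_le_mul_right _ hex
    _ = (r + r.choose ℓ * (k - ℓ)) * ((n - ℓ) * (n - ℓ - 1).choose (k - ℓ - 1)) := by ring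
    _ = _ := by rw [hid]; ring

/-- An `ℓ`-set of vertices lies in at most one edge of the expansion: it either contains
a fresh vertex, which belongs to a single edge, or equals the original `ℓ`-edge. -/
lemma edge_unique_of_subset {k ℓ r : ℕ} {e e' X : Finset ExpV}
    (he : e ∈ expEdges k ℓ r) (he' : e' ∈ expEdges k ℓ r) (hX : X ⊆ e) (hX' : X ⊆ e')
    (hc : X.card = ℓ) : e = e' := by
  obtain ⟨s, hs, rfl⟩ := mem_image.1 he
  obtain ⟨t, ht, rfl⟩ := mem_image.1 he'
  suffices hst : s = t by rw [hst]
  by_cases hfresh : ∃ p, (Sum.inr p : ExpV) ∈ X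
  · obtain ⟨p, hp⟩ := hfresh
    have h1 := hX hp
    have h2 := hX' hp
    simp only [mem_union, mem_image, reduceCtorEq, and_false, exists_false, false_or,
      Sum.inr.injEq] at h1 h2
    obtain ⟨i, -, rfl⟩ := h1
    obtain ⟨j, -, hj⟩ := h2
    exact (congrArg Prod.fst hj).symm
  · have key : ∀ u : Finset ℕ, u ∈ (range r).powersetCard ℓ →
        X ⊆ u.image Sum.inl ∪ (range (k - ℓ)).image (fun j => Sum.inr (u, j)) →
        X = u.image Sum.inl := by
      intro u hu hXu
      refine eq_of_subset_of_card_le ?_ ?_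
      · intro x hx
        rcases mem_union.1 (hXu hx) with h | h
        · exact h
        · obtain ⟨j, -, rfl⟩ := mem_image.1 h
          exact absurd ⟨_, hx⟩ hfresh
      · rw [hc, ← (mem_powersetCard.1 hu).2]
        exact card_image_le
    exact image_injective Sum.inl_injective ((key s hs hX).symm.trans (key t ht hX'))

/-- For `1 ≤ ℓ < k < r`, the `k`-expansion `K_r^{(ℓ)+}` of the complete `ℓ`-graph
on `r` vertices has `π_ℓ(K_r^{(ℓ)+}) = 0`, and every ordering of its vertex set is an
`ℓ`-vanishing order of it. -/
theorem stmt_7 (k ℓ r : ℕ) (hℓ : 1 ≤ ℓ) (hℓk : ℓ < k) (hkr : k < r) :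
    HasTuranDensity k ℓ (expVerts k ℓ r) (expEdges k ℓ r) 0 ∧
    ∀ σ : ExpV → ℕ, IsOrdering (expVerts k ℓ r) σ →
      IsVanishingOrder ℓ (expVerts k ℓ r) (expEdges k ℓ r) σ := by
  refine ⟨hasTuranDensity_zero hℓk, fun σ hσ => ⟨hσ, ?_⟩⟩
  classical
  refine ⟨fun X => if h : ∃ e ∈ expEdges k ℓ r, X ⊆ e then X.image (rankIn h.choose σ) else ∅, ?_⟩
  intro e he X hX hc
  have h : ∃ e ∈ expEdges k ℓ r, X ⊆ e := ⟨e, he, hX⟩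
  have heq : h.choose = e :=
    edge_unique_of_subset h.choose_spec.1 he h.choose_spec.2 hX hc
  simp only [dif_pos h, heq]
end

section
/- Let k, ℓ, r be integers with 2 ≤ ℓ ≤ k−2 and r ≥ 2k−1. Then for every (ℓ−1)-element subset S of the vertex set of the k-uniform tight cycle C_r^{(k)}, the link L(S) is a (k−ℓ+1)-partite (k−ℓ+1)-graph. -/
/-!
Fix a vertex `s ∈ S`. Since `r ≥ 2k - 1`, cutting the cycle at distance `k - 1` before `s` gives
positions `pos k r s v` on a line in which every edge through `s` is an interval of length `k`
(`pos_edge`). After deleting `S`, an edge of the link is a set of `k - ℓ + 1` consecutive vertices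
of `V ∖ S` in this linear order. Colouring each vertex by its rank in `V ∖ S` modulo `k - ℓ + 1`
therefore gives the vertices of such a block pairwise distinct colours, and so each colour exactly
once (`card_fiber_of_consecutive`).
-/

open Finset Filter

variable {α : Type*} {β : Type*}

/-- The edge set of the `k`-uniform tight cycle of length `r`, on the vertex set `range r`
(vertex `v_i` is `i - 1`): the edges are `{i, i+1, …, i+k-1}` with indices modulo `r`. -/
def cycleE (k r : ℕ) : Finset (Finset ℕ) :=
  (range r).image fun i => (range k).image fun t => (i + t) % r

/-- The number of steps from `s - (k - 1)` forward to `v` on the cycle of length `r`, so that `s`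
itself has position `k - 1` when `k ≤ r`. It is meant for `s ≤ r`, where `r - s` represents `-s`. -/
def pos (k r s v : ℕ) : ℕ := (v + (k - 1) + (r - s)) % r

lemma pos_injOn (k r s : ℕ) : Set.InjOn (pos k r s) (range r : Finset ℕ) := by
  intro x hx y hy h
  simp only [coe_range, Set.mem_Iio] at hx hy
  have h1 : x + ((k - 1) + (r - s)) ≡ y + ((k - 1) + (r - s)) [MOD r] := by
    simpa [pos, Nat.ModEq, add_assoc] using h
  have h2 := Nat.ModEq.add_right_cancel' _ h1
  rwa [Nat.ModEq, Nat.mod_eq_of_lt hx, Nat.mod_eq_of_lt hy] at h2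

/-- If `s` is the vertex of index `t₀` in the edge starting at `i`, then the positions along that
edge increase by one at each step, without wrapping around. -/
lemma pos_edge {k r s i t₀ t : ℕ} (hr : 2 * k - 1 ≤ r) (ht₀ : t₀ < k) (ht : t < k)
    (hs : s = (i + t₀) % r) : pos k r s ((i + t) % r) = (k - 1 - t₀) + t := by
  have hr0 : 0 < r := by omega
  have hsr : s < r := hs ▸ Nat.mod_lt _ hr0
  -- In the residues modulo `r`, `i + t + (k - 1) - s = (k - 1 - t₀) + t`, as `s = i + t₀`.
  have h : (i + t) % r + (k - 1) + (r - s) ≡ (k - 1 - t₀) + t [MOD r] := by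
    apply Nat.ModEq.add_right_cancel' s
    have e1 : (i + t) % r + (k - 1) + (r - s) + s = (i + t) % r + (k - 1 + r) := by omega
    have e2 : i + t + (k - 1 + r) = ((k - 1 - t₀) + t + (i + t₀)) + r := by omega
    have h1 : (i + t) % r + (k - 1 + r) ≡ i + t + (k - 1 + r) [MOD r] :=
      (Nat.mod_modEq _ _).add_right _
    have h2 : (k - 1 - t₀) + t + s ≡ (k - 1 - t₀) + t + (i + t₀) [MOD r] :=
      Nat.ModEq.add_left _ (hs ▸ Nat.mod_modEq _ _)
    rw [e1]
    refine h1.trans (Nat.ModEq.trans ?_ h2.symm)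
    rw [e2]
    simp [Nat.ModEq]
  have h3 : (k - 1 - t₀) + t < r := by omega
  rw [pos, h, Nat.mod_eq_of_lt h3]

/-- Ranks modulo `n + 1` take each value exactly once on a block of `n + 1` consecutive elements
of `V`, where `V` is ordered by `d`. -/
lemma card_fiber_of_consecutive (n : ℕ) (V e : Finset ℕ) (d : ℕ → ℕ) (hinj : Set.InjOn d V)
    (heV : e ⊆ V)
    (hconv : ∀ x ∈ e, ∀ y ∈ e, ∀ u ∈ V, d x ≤ d u → d u ≤ d y → u ∈ e)
    (hcard : e.card = n + 1) (i : Fin (n + 1)) :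
    (e.filter fun v => Fin.ofNat (n + 1) (V.filter fun w => d w < d v).card = i).card = 1 := by
  have key : ∀ v ∈ e, ∀ w ∈ e, d v < d w →
      Fin.ofNat (n + 1) (V.filter fun u => d u < d v).card ≠
        Fin.ofNat (n + 1) (V.filter fun u => d u < d w).card := by
    intro v hv w hw hvw heq
    have hsplit : (V.filter fun u => d u < d w).card =
        (V.filter fun u => d u < d v).card + (V.filter fun u => d v ≤ d u ∧ d u < d w).card := by
      rw [← card_union_of_disjoint]
      · congr 1
        ext u
        simp only [mem_filter, mem_union]
        grind
      · rw [disjoint_left]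
        intro u
        simp only [mem_filter]
        omega
    have hpos : 0 < (V.filter fun u => d v ≤ d u ∧ d u < d w).card :=
      card_pos.2 ⟨v, mem_filter.2 ⟨heV hv, le_rfl, hvw⟩⟩
    have hlt : (V.filter fun u => d v ≤ d u ∧ d u < d w).card < n + 1 := by
      rw [← hcard]
      apply card_lt_card
      refine (ssubset_iff_of_subset ?_).2 ⟨w, hw, by simp⟩
      intro u hu
      obtain ⟨huV, h1, h2⟩ := mem_filter.1 hu
      exact hconv v hv w hw u huV h1 h2.le
    rw [Fin.ext_iff, Fin.val_ofNat, Fin.val_ofNat, hsplit] at heq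
    -- The two ranks differ by a number strictly between `0` and `n + 1`.
    have hdvd := (Nat.modEq_iff_dvd' (Nat.le_add_right _ _)).1 heq
    rw [Nat.add_sub_cancel_left] at hdvd
    exact absurd (Nat.le_of_dvd hpos hdvd) (by omega)
  have hP : Set.InjOn (fun v => Fin.ofNat (n + 1) (V.filter fun w => d w < d v).card) e := by
    intro v hv w hw h
    rcases lt_trichotomy (d v) (d w) with hlt | heq | hlt
    · exact absurd h (key v hv w hw hlt)
    · exact hinj (heV hv) (heV hw) heq
    · exact absurd h.symm (key w hw v hv hlt)
  have himg : e.image (fun v => Fin.ofNat (n + 1) (V.filter fun w => d w < d v).card) = univ := by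
    rw [← card_eq_iff_eq_univ, card_image_of_injOn hP, hcard, Fintype.card_fin]
  obtain ⟨v, hv, hvi⟩ := mem_image.1 (himg ▸ mem_univ i)
  refine card_eq_one.2 ⟨v, ?_⟩
  ext w
  simp only [mem_filter, mem_singleton]
  constructor
  · rintro ⟨hw, hwi⟩
    exact hP hw hv (hwi.trans hvi.symm)
  · rintro rfl
    exact ⟨hv, hvi⟩

/-- For `2 ≤ ℓ ≤ k - 2` and `r ≥ 2k - 1`, the link of every `(ℓ-1)`-subset of the
vertex set of the tight cycle `C_r^{(k)}` is a `(k-ℓ+1)`-partite `(k-ℓ+1)`-graph. -/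
theorem stmt_9 (k ℓ r : ℕ) (hℓ : 2 ≤ ℓ) (hℓk : ℓ ≤ k - 2) (hr : 2 * k - 1 ≤ r) :
    ∀ S ⊆ range r, S.card = ℓ - 1 →
      IsPartite (k - ℓ + 1) (range r \ S) (linkE (cycleE k r) S) := by
  intro S hS hScard
  have hr0 : 0 < r := by omega
  obtain ⟨s, hs⟩ : S.Nonempty := card_pos.1 (by omega)
  refine ⟨fun v => Fin.ofNat (k - ℓ + 1)
    ((range r \ S).filter fun w => pos k r s w < pos k r s v).card, ?_⟩
  intro e' he' c
  simp only [linkE, cycleE, mem_image, mem_filter] at he'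
  obtain ⟨e, ⟨⟨i, -, he⟩, hSe⟩, rfl⟩ := he'
  have hse := hSe hs
  rw [← he] at hse
  obtain ⟨t₀, ht₀, hst⟩ := mem_image.1 hse
  rw [mem_range] at ht₀
  have hpos : ∀ t < k, pos k r s ((i + t) % r) = (k - 1 - t₀) + t :=
    fun t ht => pos_edge hr ht₀ ht hst.symm
  have her : e ⊆ range r := by
    intro x hx
    rw [← he] at hx
    obtain ⟨t, -, rfl⟩ := mem_image.1 hx
    exact mem_range.2 (Nat.mod_lt _ hr0)
  have hecard : e.card = k := by
    rw [← he, card_image_of_injOn, card_range]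
    intro t ht t' ht' h
    have h1 := hpos t (by simpa using ht)
    have h2 := hpos t' (by simpa using ht')
    simp only at h
    rw [h] at h1
    omega
  have hmem : ∀ x ∈ e, k - 1 - t₀ ≤ pos k r s x ∧ pos k r s x < k - 1 - t₀ + k := by
    intro x hx
    rw [← he] at hx
    obtain ⟨t, ht, rfl⟩ := mem_image.1 hx
    rw [mem_range] at ht
    rw [hpos t ht]
    omega
  apply card_fiber_of_consecutive
  · exact (pos_injOn k r s).mono (by exact_mod_cast sdiff_subset)
  · exact sdiff_subset_sdiff her le_rfl
  · intro x hx y hy u hu hxu huy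
    obtain ⟨hur, huS⟩ := mem_sdiff.1 hu
    refine mem_sdiff.2 ⟨?_, huS⟩
    have hx1 := (hmem x (mem_sdiff.1 hx).1).1
    have hy1 := (hmem y (mem_sdiff.1 hy).1).2
    -- The vertex of the edge at the same position as `u` is `u` itself.
    have ht : pos k r s u - (k - 1 - t₀) < k := by omega
    have hu' : u = (i + (pos k r s u - (k - 1 - t₀))) % r := by
      apply pos_injOn k r s (by exact_mod_cast hur)
        (by exact_mod_cast mem_range.2 (Nat.mod_lt _ hr0))
      rw [hpos _ ht]
      omega
    rw [hu', ← he]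
    exact mem_image.2 ⟨_, mem_range.2 ht, rfl⟩
  · rw [card_sdiff_of_subset hSe, hecard, hScard]
    omega
end
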